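/- arXiv:1710.10892 — 6 statements merged into one kernel-verified Lean document; each statement's English description precedes it below -/
import Mathlib

section
/- Let s = (s_1,…,s_n) be a sequence of positive integers. The s-lecture hall polytope P_n^(s) is Gorenstein if and only if there exists c ∈ ℤ^{n+1} such that c_1 = 1, c_j·s_{j−1} = c_{j−1}·s_j + gcd(s_{j−1}, s_j) for all 2 ≤ j ≤ n, and c_{n+1}·s_n = 1 + c_n. -/
open scoped BigOperators

noncomputable section

/-- The `s`-lecture hall polytope
`P_n^(s) = { x ∈ ℝ^n : 0 ≤ x_1/s_1 ≤ x_2/s_2 ≤ ⋯ ≤ x_n/s_n ≤ 1 }` (indices 0-based in Lean). -/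
def lhp (n : ℕ) (s : Fin n → ℤ) : Set (Fin n → ℝ) :=
  {x | (∀ i : Fin n, (i : ℕ) = 0 → 0 ≤ x i / (s i : ℝ)) ∧
       (∀ i j : Fin n, (j : ℕ) = (i : ℕ) + 1 → x i / (s i : ℝ) ≤ x j / (s j : ℝ)) ∧
       (∀ i : Fin n, (i : ℕ) = n - 1 → x i / (s i : ℝ) ≤ 1)}

/-- The vertex `(0,…,0,s_i,s_{i+1},…,s_n)` of the lecture hall polytope (real version). -/
def lhpVertexR (n : ℕ) (s : Fin n → ℤ) (i : Fin n) : Fin n → ℝ :=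
  fun j => if i ≤ j then (s j : ℝ) else 0

/-- The vertex `(0,…,0,s_i,s_{i+1},…,s_n)` of the lecture hall polytope (integer version). -/
def lhpVertexZ (n : ℕ) (s : Fin n → ℤ) (i : Fin n) : Fin n → ℤ :=
  fun j => if i ≤ j then s j else 0

/-- `cone(P_n^(s)) = span_{ℝ≥0} { (v,1) : v a vertex of P_n^(s) } ⊆ ℝ^{n+1}`:
the set of nonnegative combinations of `(0,1)` and the `(v_i,1)`. -/
def lhpCone (n : ℕ) (s : Fin n → ℤ) : Set (Fin (n + 1) → ℝ) :=
  {x | ∃ (a : ℝ) (b : Fin n → ℝ), 0 ≤ a ∧ (∀ i, 0 ≤ b i) ∧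
      x = a • (Fin.snoc (0 : Fin n → ℝ) 1 : Fin (n + 1) → ℝ) +
        ∑ i : Fin n, b i • (Fin.snoc (lhpVertexR n s i) 1 : Fin (n + 1) → ℝ)}

/-- Lattice points of `cone(P_n^(s))`. -/
def lhpConeZ (n : ℕ) (s : Fin n → ℤ) : Set (Fin (n + 1) → ℤ) :=
  {x | (fun i => (x i : ℝ)) ∈ lhpCone n s}

/-- Lattice points of the (relative) interior of `cone(P_n^(s))`
(the cone is full-dimensional, so the relative interior is the interior). -/
def lhpConeInteriorZ (n : ℕ) (s : Fin n → ℤ) : Set (Fin (n + 1) → ℤ) :=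
  {x | (fun i => (x i : ℝ)) ∈ interior (lhpCone n s)}

/-- `P_n^(s)` is Gorenstein: some integer point `c` satisfies
`c + (cone(P) ∩ ℤ^{n+1}) = cone(P)° ∩ ℤ^{n+1}`. -/
def IsGorenstein (n : ℕ) (s : Fin n → ℤ) : Prop :=
  ∃ c : Fin (n + 1) → ℤ,
    (fun x => c + x) '' lhpConeZ n s = lhpConeInteriorZ n s

/-- `P_n^(s)` is level: finitely many integer points `c_1,…,c_m`, all with the same
last coordinate, satisfy `⋃ (c_i + (cone(P) ∩ ℤ^{n+1})) = cone(P)° ∩ ℤ^{n+1}`. -/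
def IsLevel (n : ℕ) (s : Fin n → ℤ) : Prop :=
  ∃ C : Finset (Fin (n + 1) → ℤ), C.Nonempty ∧
    (∀ c ∈ C, ∀ c' ∈ C, c (Fin.last n) = c' (Fin.last n)) ∧
    (⋃ c ∈ C, (fun x => c + x) '' lhpConeZ n s) = lhpConeInteriorZ n s

/-- The `t`-lecture hall cone `C_m^(t) = { x ∈ ℝ^m : 0 ≤ x_1/t_1 ≤ ⋯ ≤ x_m/t_m }`. -/
def lhCone (m : ℕ) (t : Fin m → ℤ) : Set (Fin m → ℝ) :=
  {x | (∀ i : Fin m, (i : ℕ) = 0 → 0 ≤ x i / (t i : ℝ)) ∧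
       (∀ i j : Fin m, (j : ℕ) = (i : ℕ) + 1 → x i / (t i : ℝ) ≤ x j / (t j : ℝ))}

/-- `e` is an `s`-inversion sequence: `0 ≤ e_i < s_i` for all `i`. -/
def IsInvSeq (n : ℕ) (s : Fin n → ℤ) (e : Fin n → ℤ) : Prop :=
  ∀ i, 0 ≤ e i ∧ e i < s i

/-- The ratio `e_i / s_i` as a rational number. -/
def invRatio (n : ℕ) (s e : Fin n → ℤ) (i : Fin n) : ℚ := (e i : ℚ) / (s i : ℚ)

/-- The ratio `e_{i-1}/s_{i-1}`, with the convention `e_0 = 0`, `s_0 = 1`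
(paper 1-based indexing; here 0-based). -/
def prevRatio (n : ℕ) (s e : Fin n → ℤ) (i : Fin n) : ℚ :=
  if (i : ℕ) = 0 then 0
  else invRatio n s e ⟨(i : ℕ) - 1, lt_of_le_of_lt (Nat.sub_le _ _) i.isLt⟩

/-- The ascent set `Asc(e) ⊆ {0,…,n-1}` of an inversion sequence. -/
def ascSet (n : ℕ) (s e : Fin n → ℤ) : Finset (Fin n) :=
  Finset.univ.filter fun i => prevRatio n s e i < invRatio n s e i

/-- The number of ascents of an inversion sequence. -/
def asc (n : ℕ) (s e : Fin n → ℤ) : ℕ := (ascSet n s e).card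

/-- Addition of inversion sequences: componentwise mod `s_i`,
with representative in `{0,…,s_i - 1}`. -/
def invAdd (n : ℕ) (s : Fin n → ℤ) (e e' : Fin n → ℤ) : Fin n → ℤ :=
  fun i => (e i + e' i) % s i

/-- `hStar n s k = # I_{n,k}^(s)`, the number of `s`-inversion sequences with `k` ascents
(the `k`-th coefficient of the `s`-Eulerian polynomial). -/
def hStar (n : ℕ) (s : Fin n → ℤ) (k : ℕ) : ℕ :=
  Nat.card {e : Fin n → ℤ // IsInvSeq n s e ∧ asc n s e = k}

/-- `s` is `u`-generated by a sequence `u` of positive integers: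
`s_2 = u_1 s_1 - 1` and `s_{i+1} = u_i s_i - s_{i-1}` for `i > 1`. -/
def IsUGenerated (n : ℕ) (s : Fin n → ℤ) : Prop :=
  ∃ u : Fin n → ℤ,
    (∀ i : Fin n, (i : ℕ) < n - 1 → 0 < u i) ∧
    (∀ k j : Fin n, (j : ℕ) = (k : ℕ) + 1 → (k : ℕ) = 0 → s j = u k * s k - 1) ∧
    (∀ a k j : Fin n, (k : ℕ) = (a : ℕ) + 1 → (j : ℕ) = (k : ℕ) + 1 →
      s j = u k * s k - s a)

/-- The (half-open) fundamental parallelepiped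
`Π = { Σ η_i (v_i,1) : 0 ≤ η_i < 1 }` of `P_n^(s)`. -/
def fpp (n : ℕ) (s : Fin n → ℤ) : Set (Fin (n + 1) → ℝ) :=
  {x | ∃ (a : ℝ) (b : Fin n → ℝ),
      (0 ≤ a ∧ a < 1) ∧ (∀ i, 0 ≤ b i ∧ b i < 1) ∧
      x = a • (Fin.snoc (0 : Fin n → ℝ) 1 : Fin (n + 1) → ℝ) +
        ∑ i : Fin n, b i • (Fin.snoc (lhpVertexR n s i) 1 : Fin (n + 1) → ℝ)}

/-- The lattice point `λ(e) ∈ ℤ^{n+1}` associated to an inversion sequence `e`: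
`λ(e)_j = ℓ_j s_j - e_j` with `ℓ_j = #(Asc(e) ∩ {0,…,j-1})` (paper 1-based `j`),
and last coordinate `asc(e)`. -/
def lamOf (n : ℕ) (s : Fin n → ℤ) (e : Fin n → ℤ) : Fin (n + 1) → ℤ :=
  Fin.snoc
    (fun j : Fin n =>
      (((ascSet n s e).filter fun i : Fin n => (i : ℕ) ≤ (j : ℕ)).card : ℤ) * s j - e j)
    (asc n s e : ℤ)

/-- A coefficient sequence `h` (of a polynomial `Σ h_j z^j` of degree `r`) is palindromic:
`h_r ≠ 0`, `h_k = 0` for `k > r`, and `h_j = h_{r-j}` for `0 ≤ j ≤ r`. -/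
def IsPalindromic (h : ℕ → ℕ) : Prop :=
  ∃ r : ℕ, h r ≠ 0 ∧ (∀ k, r < k → h k = 0) ∧ ∀ j, j ≤ r → h j = h (r - j)

end

/-!
With `t = (s, 1)`, the cone over the polytope is `{x | 0 ≤ x₀ / t₀ ≤ ⋯ ≤ xₙ / tₙ}`, a simplicial
cone. Clearing denominators, its facets are the zero sets of `x₀` and of
`t_{i-1} x_i - t_i x_{i-1}`, which on lattice points take exactly the multiples of `1` and of
`gcd (t_{i-1}, t_i)`. Near every facet there is an interior lattice point on which the facet
form takes its smallest positive value, so translation by `c` carries the lattice points of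
the cone onto those of its interior if and only if every facet form takes its smallest
positive value at `c`.
-/

theorem image_add_nonneg_eq_pos_iff {A ι : Type*} [AddCommGroup A] {φ : A →+ ι → ℤ} {g : ι → ℤ}
    (g_dvd : ∀ x i, g i ∣ φ x i) (exists_pos_eq : ∀ i, ∃ y, (∀ j, 0 < φ y j) ∧ φ y i = g i)
    (c : A) :
    (fun x => c + x) '' {x | 0 ≤ φ x} = {x | ∀ i, 0 < φ x i} ↔ φ c = g := by
  constructor
  · intro image_eq
    have c_pos : ∀ i, 0 < φ c i := image_eq.subset ⟨0, by simp, add_zero c⟩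
    ext i
    obtain ⟨y, y_pos, y_eq⟩ := exists_pos_eq i
    obtain ⟨x, x_nonneg, rfl⟩ := image_eq.superset y_pos
    refine le_antisymm ?_ (Int.le_of_dvd (c_pos i) (g_dvd c i))
    calc φ c i ≤ φ c i + φ x i := le_add_of_nonneg_right (x_nonneg i)
      _ = g i := by rw [← y_eq, map_add, Pi.add_apply]
  · intro c_eq
    have g_pos : ∀ i, 0 < g i := fun i => by
      obtain ⟨y, y_pos, y_eq⟩ := exists_pos_eq i
      exact y_eq ▸ y_pos i
    ext y
    constructor
    · rintro ⟨x, x_nonneg, rfl⟩ i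
      rw [map_add, c_eq]
      exact add_pos_of_pos_of_nonneg (g_pos i) (x_nonneg i)
    · intro y_pos
      refine ⟨y - c, fun i => ?_, add_sub_cancel c y⟩
      rw [map_sub, c_eq]
      exact sub_nonneg.2 (Int.le_of_dvd (y_pos i) (g_dvd y i))

section FacetForms

variable {n : ℕ} {R : Type*} [CommRing R]

/-- The facet forms `x₀` and `t_i x_{i+1} - t_{i+1} x_i` of the cone
`{x | 0 ≤ x₀ / t₀ ≤ ⋯ ≤ xₙ / tₙ}`, bundled into one linear map. -/
def facetMap (t : Fin (n + 1) → R) : (Fin (n + 1) → R) →ₗ[R] (Fin (n + 1) → R) where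
  toFun x := Fin.cons (x 0) fun i => t i.castSucc * x i.succ - t i.succ * x i.castSucc
  map_add' x y := by ext i; cases i using Fin.cases <;> simp; ring
  map_smul' a x := by ext i; cases i using Fin.cases <;> simp; ring

/-- The values of the facet forms on the opposite extreme rays
`(0, …, 0, t_i, …, t_n) = (Set.Ici i).indicator t`. -/
def rayHeight (t : Fin (n + 1) → R) : Fin (n + 1) → R :=
  Fin.cons (t 0) fun i => t i.castSucc * t i.succ

@[simp] theorem facetMap_apply_zero (t x : Fin (n + 1) → R) : facetMap t x 0 = x 0 := rfl

@[simp] theorem facetMap_apply_succ (t x : Fin (n + 1) → R) (i : Fin n) :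
    facetMap t x i.succ = t i.castSucc * x i.succ - t i.succ * x i.castSucc := rfl

theorem facetMap_comp {S : Type*} [CommRing S] (f : R →+* S) (t x : Fin (n + 1) → R) :
    facetMap (f ∘ t) (f ∘ x) = f ∘ facetMap t x := by
  ext i; cases i using Fin.cases <;> simp

theorem facetMap_indicator_Ici (t : Fin (n + 1) → R) (i : Fin (n + 1)) :
    facetMap t ((Set.Ici i).indicator t) = Pi.single i (rayHeight t i) := by
  ext k
  cases k using Fin.cases with
  | zero => cases i using Fin.cases <;> simp [rayHeight]
  | succ k =>
    rw [facetMap_apply_succ]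
    rcases lt_trichotomy i k.succ with lt | rfl | gt
    · have le : i ≤ k.castSucc := Fin.le_castSucc_iff.2 lt
      simp [le, lt.le, lt.ne', mul_comm]
    · simp [rayHeight]
    · have gt' : k.castSucc < i := Fin.castSucc_lt_succ.trans gt
      simp [gt'.not_ge, gt.not_ge, gt.ne]

theorem facetMap_sum_smul_indicator_Ici (t β : Fin (n + 1) → R) :
    facetMap t (∑ i, β i • (Set.Ici i).indicator t) = β * rayHeight t := by
  ext k
  simp [facetMap_indicator_Ici, Finset.sum_apply, Pi.single_apply]

theorem rayHeight_ne_zero [NoZeroDivisors R] {t : Fin (n + 1) → R} (ht : ∀ i, t i ≠ 0)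
    (i : Fin (n + 1)) : rayHeight t i ≠ 0 := by
  cases i using Fin.cases with
  | zero => exact ht 0
  | succ i => exact mul_ne_zero (ht _) (ht _)

theorem rayHeight_pos [LinearOrder R] [IsStrictOrderedRing R] {t : Fin (n + 1) → R}
    (ht : ∀ i, 0 < t i) (i : Fin (n + 1)) : 0 < rayHeight t i := by
  cases i using Fin.cases with
  | zero => exact ht 0
  | succ i => exact mul_pos (ht _) (ht _)

end FacetForms

section RealCone

variable {n : ℕ} {K : Type*} [Field K] {t : Fin (n + 1) → K}

theorem facetMap_sum_div_rayHeight (ht : ∀ i, t i ≠ 0) (y : Fin (n + 1) → K) :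
    facetMap t (∑ i, (y / rayHeight t) i • (Set.Ici i).indicator t) = y := by
  rw [facetMap_sum_smul_indicator_Ici]
  ext i
  exact div_mul_cancel₀ (y i) (rayHeight_ne_zero ht i)

theorem facetMap_surjective (ht : ∀ i, t i ≠ 0) : Function.Surjective (facetMap t) :=
  fun y => ⟨_, facetMap_sum_div_rayHeight ht y⟩

theorem exists_nonneg_sum_indicator_Ici_iff [LinearOrder K] [IsStrictOrderedRing K]
    (ht : ∀ i, 0 < t i) {x : Fin (n + 1) → K} :
    (∃ β : Fin (n + 1) → K, 0 ≤ β ∧ x = ∑ i, β i • (Set.Ici i).indicator t) ↔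
      0 ≤ facetMap t x := by
  constructor
  · rintro ⟨β, β_nonneg, rfl⟩ i
    rw [facetMap_sum_smul_indicator_Ici]
    exact mul_nonneg (β_nonneg i) (rayHeight_pos ht i).le
  · intro x_nonneg
    have t_ne : ∀ i, t i ≠ 0 := fun i => (ht i).ne'
    have injective : Function.Injective (facetMap t) :=
      LinearMap.injective_iff_surjective.2 (facetMap_surjective t_ne)
    exact ⟨facetMap t x / rayHeight t,
      fun i => div_nonneg (x_nonneg i) (rayHeight_pos ht i).le,
      injective (facetMap_sum_div_rayHeight t_ne _).symm⟩

theorem interior_nonneg_facetMap {t : Fin (n + 1) → ℝ} (ht : ∀ i, t i ≠ 0) :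
    interior {x | 0 ≤ facetMap t x} = {x | ∀ i, 0 < facetMap t x i} := by
  have interior_orthant :
      interior (Set.Ici (0 : Fin (n + 1) → ℝ)) = {y | ∀ i, 0 < y i} := by
    rw [← Set.pi_univ_Ici, interior_pi_set Set.finite_univ]
    ext y
    simp
  have isOpenMap := (facetMap t).isOpenMap_of_finiteDimensional (facetMap_surjective ht)
  have preimage_interior := isOpenMap.preimage_interior_eq_interior_preimage
    (facetMap t).continuous_of_finiteDimensional (Set.Ici 0)
  rw [interior_orthant] at preimage_interior
  exact preimage_interior.symm

end RealCone

section LatticeDistance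

variable {n : ℕ}

/-- The positive generators of the value groups of the facet forms on the lattice. -/
def facetGcd (t : Fin (n + 1) → ℤ) : Fin (n + 1) → ℤ :=
  Fin.cons 1 fun i => (Int.gcd (t i.castSucc) (t i.succ) : ℤ)

theorem facetGcd_dvd_facetMap (t x : Fin (n + 1) → ℤ) (i : Fin (n + 1)) :
    facetGcd t i ∣ facetMap t x i := by
  cases i using Fin.cases with
  | zero => exact one_dvd _
  | succ i => exact dvd_sub ((Int.gcd_dvd_left ..).mul_right _) ((Int.gcd_dvd_right ..).mul_right _)

theorem exists_facetMap_apply_eq_facetGcd (t : Fin (n + 1) → ℤ) (i : Fin (n + 1)) :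
    ∃ z, facetMap t z i = facetGcd t i := by
  cases i using Fin.cases with
  | zero => exact ⟨1, rfl⟩
  | succ i =>
    refine ⟨Pi.single i.succ (Int.gcdA (t i.castSucc) (t i.succ)) -
      Pi.single i.castSucc (Int.gcdB (t i.castSucc) (t i.succ)), ?_⟩
    simp [facetGcd, Int.gcd_eq_gcd_ab, Fin.castSucc_lt_succ.ne, Fin.castSucc_lt_succ.ne']

theorem facetGcd_pos {t : Fin (n + 1) → ℤ} (ht : ∀ i, t i ≠ 0) (i : Fin (n + 1)) :
    0 < facetGcd t i := by
  cases i using Fin.cases with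
  | zero => exact one_pos
  | succ i => exact Int.natCast_pos.2 (Int.gcd_pos_of_ne_zero_left _ (ht _))

theorem exists_facetMap_pos_and_apply_eq_facetGcd {t : Fin (n + 1) → ℤ} (ht : ∀ i, t i ≠ 0)
    (i : Fin (n + 1)) : ∃ y, (∀ j, 0 < facetMap t y j) ∧ facetMap t y i = facetGcd t i := by
  obtain ⟨z, z_eq⟩ := exists_facetMap_apply_eq_facetGcd t i
  -- Adding multiples of the rays spanning the `i`-th facet leaves the `i`-th form unchanged.
  let β : Fin (n + 1) → ℤ :=
    Function.update (fun j => (|facetMap t z j| + 1) * rayHeight t j) i 0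
  have facetMap_eq : facetMap t (z + ∑ j, β j • (Set.Ici j).indicator t) =
      facetMap t z + β * rayHeight t := by
    rw [map_add, facetMap_sum_smul_indicator_Ici]
  have apply_eq : facetMap t (z + ∑ j, β j • (Set.Ici j).indicator t) i = facetGcd t i := by
    rw [facetMap_eq]
    simp [β, z_eq]
  refine ⟨_, fun j => ?_, apply_eq⟩
  obtain rfl | j_ne := eq_or_ne j i
  · exact apply_eq ▸ facetGcd_pos ht j
  · have height_sq_pos : 0 < rayHeight t j * rayHeight t j :=
      mul_self_pos.2 (rayHeight_ne_zero ht j)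
    simp only [facetMap_eq, Pi.add_apply, Pi.mul_apply, β, Function.update_of_ne j_ne]
    calc 0 < facetMap t z j + (|facetMap t z j| + 1) := by linarith [neg_abs_le (facetMap t z j)]
      _ ≤ facetMap t z j + (|facetMap t z j| + 1) * (rayHeight t j * rayHeight t j) := by
        gcongr
        exact le_mul_of_one_le_right (by positivity) height_sq_pos
      _ = facetMap t z j + (|facetMap t z j| + 1) * rayHeight t j * rayHeight t j := by
        rw [mul_assoc]

end LatticeDistance

section LectureHallCone

variable {n : ℕ} {s : Fin n → ℤ}

/-- The sequence `(s₁, …, sₙ, 1)` of denominators of the cone over the `s`-lecture hall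
polytope. -/
def coneDenom (s : Fin n → ℤ) : Fin (n + 1) → ℤ := Fin.snoc s 1

theorem coneDenom_pos (hs : ∀ i, 0 < s i) : ∀ i, 0 < coneDenom s i :=
  Fin.forall_fin_succ'.2 ⟨by simpa [coneDenom] using hs, by simp [coneDenom]⟩

theorem indicator_Ici_castSucc_coneDenom (s : Fin n → ℤ) (i : Fin n) :
    (Set.Ici i.castSucc).indicator (Int.cast ∘ coneDenom s) =
      (Fin.snoc (lhpVertexR n s i) 1 : Fin (n + 1) → ℝ) := by
  ext j
  cases j using Fin.lastCases <;> simp [coneDenom, lhpVertexR, Set.indicator_apply, Fin.le_last]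

theorem indicator_Ici_last_coneDenom (s : Fin n → ℤ) :
    (Set.Ici (Fin.last n)).indicator (Int.cast ∘ coneDenom s) =
      (Fin.snoc (0 : Fin n → ℝ) 1 : Fin (n + 1) → ℝ) := by
  ext j
  cases j using Fin.lastCases <;> simp [coneDenom]

theorem mem_lhpCone_iff_exists_sum_indicator_Ici {x : Fin (n + 1) → ℝ} :
    x ∈ lhpCone n s ↔ ∃ β : Fin (n + 1) → ℝ, 0 ≤ β ∧
      x = ∑ i, β i • (Set.Ici i).indicator (Int.cast ∘ coneDenom s) := by
  simp only [Fin.sum_univ_castSucc, indicator_Ici_castSucc_coneDenom,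
    indicator_Ici_last_coneDenom, Pi.le_def, Pi.zero_apply, Fin.forall_fin_succ']
  constructor
  · rintro ⟨a, b, a_nonneg, b_nonneg, rfl⟩
    exact ⟨Fin.snoc b a, by simpa using ⟨b_nonneg, a_nonneg⟩, by simp [add_comm]⟩
  · rintro ⟨β, ⟨init_nonneg, last_nonneg⟩, rfl⟩
    exact ⟨_, _, last_nonneg, init_nonneg, add_comm _ _⟩

theorem lhpCone_eq (hs : ∀ i, 0 < s i) :
    lhpCone n s = {x | 0 ≤ facetMap (Int.cast ∘ coneDenom s) x} := by
  ext x
  exact mem_lhpCone_iff_exists_sum_indicator_Ici.trans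
    (exists_nonneg_sum_indicator_Ici_iff fun i => Int.cast_pos.2 (coneDenom_pos hs i))

theorem facetMap_intCast (t x : Fin (n + 1) → ℤ) (i : Fin (n + 1)) :
    facetMap (Int.cast ∘ t) (fun j => (x j : ℝ)) i = facetMap t x i :=
  congrFun (facetMap_comp (Int.castRingHom ℝ) t x) i

theorem lhpConeZ_eq (hs : ∀ i, 0 < s i) :
    lhpConeZ n s = {x | 0 ≤ facetMap (coneDenom s) x} := by
  ext x
  simp [lhpConeZ, lhpCone_eq hs, Pi.le_def, facetMap_intCast]

theorem lhpConeInteriorZ_eq (hs : ∀ i, 0 < s i) :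
    lhpConeInteriorZ n s = {x | ∀ i, 0 < facetMap (coneDenom s) x i} := by
  have cast_ne_zero : ∀ i, (Int.cast ∘ coneDenom s) i ≠ (0 : ℝ) :=
    fun i => Int.cast_ne_zero.2 (coneDenom_pos hs i).ne'
  ext x
  simp [lhpConeInteriorZ, lhpCone_eq hs, interior_nonneg_facetMap cast_ne_zero, facetMap_intCast]

theorem image_add_lhpConeZ_eq_iff (hs : ∀ i, 0 < s i) (c : Fin (n + 1) → ℤ) :
    (fun x => c + x) '' lhpConeZ n s = lhpConeInteriorZ n s ↔
      facetMap (coneDenom s) c = facetGcd (coneDenom s) := by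
  rw [lhpConeZ_eq hs, lhpConeInteriorZ_eq hs]
  exact image_add_nonneg_eq_pos_iff (φ := (facetMap (coneDenom s)).toAddMonoidHom)
    (facetGcd_dvd_facetMap _)
    (exists_facetMap_pos_and_apply_eq_facetGcd fun i => (coneDenom_pos hs i).ne') c

end LectureHallCone

section Recurrence

variable {n : ℕ}

theorem facetMap_eq_facetGcd_iff (t c : Fin (n + 1) → ℤ) :
    facetMap t c = facetGcd t ↔
      c 0 = 1 ∧ ∀ i : Fin n,
        c i.succ * t i.castSucc = c i.castSucc * t i.succ + Int.gcd (t i.castSucc) (t i.succ) := by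
  simp only [funext_iff, Fin.forall_fin_succ, facetMap_apply_zero, facetMap_apply_succ, facetGcd,
    Fin.cons_zero, Fin.cons_succ, sub_eq_iff_eq_add', mul_comm]

theorem forall_val_eq_succ_iff {p : Fin (n + 1) → Fin (n + 1) → Prop} :
    (∀ k j : Fin (n + 1), (j : ℕ) = k + 1 → p k j) ↔ ∀ i : Fin n, p i.castSucc i.succ := by
  refine ⟨fun h i => h _ _ rfl, fun h k j j_eq => ?_⟩
  have j_ne : j ≠ 0 := by rintro rfl; simp at j_eq
  obtain ⟨i, rfl⟩ := Fin.exists_succ_eq.2 j_ne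
  obtain rfl : k = i.castSucc := Fin.ext (Nat.succ_injective j_eq.symm)
  exact h i

theorem facetMap_coneDenom_eq_facetGcd_iff (s : Fin n → ℤ) (c : Fin (n + 1) → ℤ) :
    facetMap (coneDenom s) c = facetGcd (coneDenom s) ↔
      c 0 = 1 ∧
      (∀ k j : Fin n, (j : ℕ) = (k : ℕ) + 1 →
        c j.castSucc * s k = c k.castSucc * s j + (Int.gcd (s k) (s j) : ℤ)) ∧
      (∀ i : Fin n, (i : ℕ) = n - 1 → c (Fin.last n) * s i = 1 + c i.castSucc) := by
  rw [facetMap_eq_facetGcd_iff]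
  refine and_congr_right fun _ => ?_
  cases n with
  | zero => simp
  | succ m =>
    have forall_val_eq_last {p : Fin (m + 1) → Prop} :
        (∀ i : Fin (m + 1), (i : ℕ) = m + 1 - 1 → p i) ↔ p (Fin.last m) :=
      ⟨fun h => h _ rfl, fun h i i_eq => (Fin.ext i_eq : i = Fin.last m) ▸ h⟩
    rw [Fin.forall_fin_succ', forall_val_eq_succ_iff, forall_val_eq_last]
    simp [coneDenom, Fin.succ_castSucc, -Fin.castSucc_succ, add_comm]

end Recurrence

theorem lhp_gorenstein_iff (n : ℕ) (s : Fin n → ℤ) (hs : ∀ i, 0 < s i) :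
    IsGorenstein n s ↔
      ∃ c : Fin (n + 1) → ℤ,
        c 0 = 1 ∧
        (∀ k j : Fin n, (j : ℕ) = (k : ℕ) + 1 →
          c j.castSucc * s k = c k.castSucc * s j + (Int.gcd (s k) (s j) : ℤ)) ∧
        (∀ i : Fin n, (i : ℕ) = n - 1 →
          c (Fin.last n) * s i = 1 + c i.castSucc) :=
  exists_congr fun c =>
    (image_add_lhpConeZ_eq_iff hs c).trans (facetMap_coneDenom_eq_facetGcd_iff s c)
end

section
/- Let s = (s_1,…,s_n) be a sequence of positive integers such that gcd(s_{i−1}, s_i) = 1 for some index 1 < i ≤ n, and let ←s := (s_n, s_{n−1}, …, s_1). Then the s-lecture hall polytope P_n^(s) is Gorenstein if and only if there exist c, d ∈ ℤ^n with c_1 = d_1 = 1 satisfying c_j·s_{j−1} = c_{j−1}·s_j + gcd(s_{j−1}, s_j) and d_j·(←s)_{j−1} = d_{j−1}·(←s)_j + gcd((←s)_{j−1}, (←s)_j) for all 2 ≤ j ≤ n. -/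
open scoped BigOperators

/-!
The cone over `P_n^(s)` is the lecture hall cone of the sequence `t = (s, 1)` of length `n + 1`. It
is simplicial: its facet forms `x ↦ x₀` and `x ↦ tₖ xₖ₊₁ - tₖ₊₁ xₖ` are, up to positive factors,
dual to its generators. The values of the first form on lattice points are all integers, those of
the others the multiples of `gcd(tₖ, tₖ₊₁)`, so translation by `c` carries the lattice points of the
cone onto the interior ones exactly when every facet form takes its smallest positive value at `c`.
For the first `n` facets this is the first recurrence, and for the last one it is `s_n ∣ c_n + 1`.

If `c_n + 1 = q s_n`, then the reversal of `q s - c` satisfies the second recurrence. Conversely,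
for solutions `c` and `d` of both recurrences, `c` plus the reversal of `d` is proportional to `s`,
and the factor is an integer because the `s_i` have no common divisor; in the last coordinate this
is `s_n ∣ c_n + 1`.
-/

namespace LectureHall

section SimplicialCone

lemma map_sum_smul_of_map_eq_single {ι R M : Type*} [Fintype ι] [DecidableEq ι] [CommSemiring R]
    [AddCommMonoid M] [Module R M] {φ : M →ₗ[R] ι → R} {v : ι → M} {d : ι → R}
    (hv : ∀ i, φ (v i) = Pi.single i (d i)) (b : ι → R) : φ (∑ i, b i • v i) = b * d := by
  ext i
  simp [hv, Pi.single_apply]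

variable {ι 𝕜 V : Type*} [DecidableEq ι] [Field 𝕜] [AddCommGroup V] [Module 𝕜 V]
  {φ : V →ₗ[𝕜] ι → 𝕜} {v : ι → V} {d : ι → 𝕜}

lemma surjective_of_map_eq_single [Finite ι] (hd : ∀ i, d i ≠ 0)
    (hv : ∀ i, φ (v i) = Pi.single i (d i)) : Function.Surjective φ := by
  have := Fintype.ofFinite ι
  refine fun y ↦ ⟨∑ i, (y i / d i) • v i, ?_⟩
  rw [map_sum_smul_of_map_eq_single hv]
  ext i
  exact div_mul_cancel₀ (y i) (hd i)

lemma exists_nonneg_sum_smul_eq_iff [Fintype ι] [LinearOrder 𝕜] [IsStrictOrderedRing 𝕜]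
    (hφ : Function.Injective φ) (hd : ∀ i, 0 < d i) (hv : ∀ i, φ (v i) = Pi.single i (d i))
    {x : V} : (∃ b : ι → 𝕜, 0 ≤ b ∧ x = ∑ i, b i • v i) ↔ 0 ≤ φ x := by
  constructor
  · rintro ⟨b, hb, rfl⟩ i
    rw [map_sum_smul_of_map_eq_single hv]
    exact mul_nonneg (hb i) (hd i).le
  · refine fun hx ↦ ⟨fun i ↦ φ x i / d i, fun i ↦ div_nonneg (hx i) (hd i).le, hφ ?_⟩
    rw [map_sum_smul_of_map_eq_single hv]
    ext i
    exact (div_mul_cancel₀ (φ x i) (hd i).ne').symm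

end SimplicialCone

lemma interior_setOf_nonneg {ι V : Type*} [Finite ι] [AddCommGroup V] [Module ℝ V]
    [TopologicalSpace V] [IsTopologicalAddGroup V] [ContinuousSMul ℝ V] [T2Space V]
    [FiniteDimensional ℝ V] {φ : V →ₗ[ℝ] ι → ℝ} (hφ : Function.Surjective φ) :
    interior {x | 0 ≤ φ x} = {x | ∀ i, 0 < φ x i} := by
  have interior_orthant : interior (Set.Ici (0 : ι → ℝ)) = Set.univ.pi fun _ ↦ Set.Ioi 0 := by
    simp only [← Set.pi_univ_Ici, interior_pi_set Set.finite_univ, Pi.zero_apply, interior_Ici]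
  change interior (φ ⁻¹' Set.Ici 0) = _
  rw [← (φ.isOpenMap_of_finiteDimensional hφ).preimage_interior_eq_interior_preimage
    φ.continuous_of_finiteDimensional, interior_orthant]
  ext x
  simp

section IntegralForms

variable {ι M : Type*} [Finite ι] [AddCommGroup M] {φ : M →ₗ[ℤ] ι → ℤ} {g : ι → ℤ}

lemma exists_apply_eq_and_forall_ne_pos {i : ι} {w : M} (hwi : φ w i = 0)
    (hw : ∀ j ≠ i, 0 < φ w j) (y : M) : ∃ z, φ z i = φ y i ∧ ∀ j ≠ i, 0 < φ z j := by
  obtain ⟨N, hN⟩ : ∃ N : ℤ, ∀ j, |φ y j| < N := by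
    obtain ⟨N, hN⟩ := Finite.exists_le fun j ↦ |φ y j|
    exact ⟨N + 1, fun j ↦ Int.lt_add_one_of_le (hN j)⟩
  refine ⟨y + N • w, by simp [hwi], fun j hj ↦ ?_⟩
  have hNw : N ≤ N * φ w j :=
    le_mul_of_one_le_right ((abs_nonneg _).trans (hN j).le) (hw j hj)
  simp only [map_add, map_smul, Pi.add_apply, Pi.smul_apply, smul_eq_mul]
  linarith [neg_abs_le (φ y j), hN j]

theorem image_add_nonneg_eq_pos_iff (hg : ∀ i, 0 < g i) (hdvd : ∀ x i, g i ∣ φ x i)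
    (hattained : ∀ i, ∃ y, φ y i = g i)
    (hfacet : ∀ i, ∃ w, φ w i = 0 ∧ ∀ j ≠ i, 0 < φ w j) {c : M} :
    (fun x ↦ c + x) '' {x | 0 ≤ φ x} = {x | ∀ i, 0 < φ x i} ↔ φ c = g := by
  refine ⟨fun hc ↦ ?_, fun hc ↦ ?_⟩
  · ext i
    have hci : 0 < φ c i := by
      have hmem : c ∈ {x | ∀ i, 0 < φ x i} := hc ▸ ⟨0, (map_zero φ).ge, add_zero c⟩
      exact hmem i
    obtain ⟨y, hy⟩ := hattained i
    obtain ⟨w, hwi, hw⟩ := hfacet i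
    obtain ⟨z, hzi, hz⟩ := exists_apply_eq_and_forall_ne_pos hwi hw y
    have hz_pos : z ∈ {x | ∀ j, 0 < φ x j} := fun j ↦ by
      by_cases hji : j = i
      · rw [hji, hzi, hy]
        exact hg i
      · exact hz j hji
    rw [← hc] at hz_pos
    obtain ⟨x, hx, rfl⟩ := hz_pos
    have hle : φ c i ≤ g i := by
      rw [← hy, ← hzi, map_add]
      exact le_add_of_nonneg_right (hx i)
    exact hle.antisymm (Int.le_of_dvd hci (hdvd c i))
  · ext x
    constructor
    · rintro ⟨y, hy, rfl⟩ i
      rw [map_add, hc]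
      exact add_pos_of_pos_of_nonneg (hg i) (hy i)
    · refine fun hx ↦ ⟨x - c, fun i ↦ ?_, add_sub_cancel c x⟩
      rw [map_sub, hc]
      exact sub_nonneg.2 (Int.le_of_dvd (hx i) (hdvd x i))

end IntegralForms

section FacetForm

variable {n : ℕ} (R : Type*) [CommRing R] (t : Fin (n + 1) → ℤ)

/-- The facet forms of the lecture hall cone `0 ≤ x₀/t₀ ≤ ⋯ ≤ xₙ/tₙ`, with denominators cleared:
`x₀` for the first inequality and `tₖ xₖ₊₁ - tₖ₊₁ xₖ` for the one between `xₖ` and `xₖ₊₁`. They are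
defined over any ring, to be used on real and on lattice points. -/
def facetForm : (Fin (n + 1) → R) →ₗ[R] Fin (n + 1) → R where
  toFun x := Fin.cons (x 0) fun k : Fin n ↦ (t k.castSucc : R) * x k.succ - t k.succ * x k.castSucc
  map_add' x y := by
    ext i
    cases i using Fin.cases with
    | zero => simp
    | succ k => simp only [Pi.add_apply, Fin.cons_succ]; ring
  map_smul' a x := by
    ext i
    cases i using Fin.cases with
    | zero => simp
    | succ k => simp only [Pi.smul_apply, Fin.cons_succ, smul_eq_mul, RingHom.id_apply]; ring

/-- The generator `(0, …, 0, tᵢ, …, tₙ)` of the lecture hall cone of `t`; it lies on every facet but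
the `i`-th one. -/
def ray (i : Fin (n + 1)) : Fin (n + 1) → R :=
  fun j ↦ if i ≤ j then (t j : R) else 0

/-- The value of the `i`-th facet form on the `i`-th generator of the lecture hall cone of `t`. -/
def facetHeight : Fin (n + 1) → ℤ :=
  Fin.cons (t 0) fun k : Fin n ↦ t k.castSucc * t k.succ

/-- The positive generator of the group of values of the `i`-th facet form on lattice points. -/
def facetGcd : Fin (n + 1) → ℤ :=
  Fin.cons 1 fun k : Fin n ↦ (Int.gcd (t k.castSucc) (t k.succ) : ℤ)

@[simp]
lemma facetForm_apply_zero (x : Fin (n + 1) → R) : facetForm R t x 0 = x 0 := rfl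

@[simp]
lemma facetForm_apply_succ (x : Fin (n + 1) → R) (k : Fin n) :
    facetForm R t x k.succ = t k.castSucc * x k.succ - t k.succ * x k.castSucc := rfl

lemma facetForm_intCast (x : Fin (n + 1) → ℤ) (i : Fin (n + 1)) :
    facetForm R t (fun j ↦ (x j : R)) i = (facetForm ℤ t x i : R) := by
  cases i using Fin.cases <;> simp

lemma facetForm_ray (i : Fin (n + 1)) :
    facetForm R t (ray R t i) = Pi.single i (facetHeight t i : R) := by
  ext j
  cases j using Fin.cases with
  | zero =>
    by_cases hi : i = 0
    · subst hi
      simp [ray, facetHeight]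
    · simp [ray, hi, Ne.symm hi]
  | succ k =>
    rcases lt_trichotomy i k.succ with hi | rfl | hi
    · simp [ray, hi.le, Fin.le_castSucc_iff.2 hi, hi.ne', mul_comm]
    · simp [ray, facetHeight]
    · simp [ray, hi.not_ge, Fin.le_castSucc_iff, hi.le, hi.ne]

variable {t}

lemma facetHeight_pos (ht : ∀ i, 0 < t i) (i : Fin (n + 1)) : 0 < facetHeight t i := by
  cases i using Fin.cases with
  | zero => exact ht 0
  | succ k => exact mul_pos (ht _) (ht _)

lemma facetGcd_pos (ht : ∀ i, 0 < t i) (i : Fin (n + 1)) : 0 < facetGcd t i := by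
  cases i using Fin.cases with
  | zero => exact one_pos
  | succ k => exact Int.natCast_pos.2 (Int.gcd_pos_of_ne_zero_left _ (ht _).ne')

variable (t)

lemma facetGcd_dvd_facetForm (x : Fin (n + 1) → ℤ) (i : Fin (n + 1)) :
    facetGcd t i ∣ facetForm ℤ t x i := by
  cases i using Fin.cases with
  | zero => exact one_dvd _
  | succ k =>
    exact dvd_sub ((Int.gcd_dvd_left _ _).mul_right _) ((Int.gcd_dvd_right _ _).mul_right _)

lemma exists_facetForm_eq_facetGcd (i : Fin (n + 1)) :
    ∃ x, facetForm ℤ t x i = facetGcd t i := by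
  cases i using Fin.cases with
  | zero => exact ⟨1, rfl⟩
  | succ k =>
    let a := Int.gcdA (t k.castSucc) (t k.succ)
    let b := Int.gcdB (t k.castSucc) (t k.succ)
    refine ⟨Pi.single k.succ a - Pi.single k.castSucc b, ?_⟩
    have bezout := Int.gcd_eq_gcd_ab (t k.castSucc) (t k.succ)
    simp [facetGcd, bezout, a, b, Fin.castSucc_lt_succ.ne, Fin.castSucc_lt_succ.ne']

variable {t}

lemma exists_facetForm_eq_zero_and_forall_ne_pos (ht : ∀ i, 0 < t i) (i : Fin (n + 1)) :
    ∃ w, facetForm ℤ t w i = 0 ∧ ∀ j ≠ i, 0 < facetForm ℤ t w j := by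
  let b : Fin (n + 1) → ℤ := fun j ↦ if j = i then 0 else 1
  refine ⟨∑ j, b j • ray ℤ t j, ?_, fun j hj ↦ ?_⟩ <;>
    rw [map_sum_smul_of_map_eq_single (facetForm_ray ℤ t)]
  · simp [b]
  · simpa [b, hj] using facetHeight_pos ht j

theorem image_add_facetForm_nonneg_eq_pos_iff (ht : ∀ i, 0 < t i) {c : Fin (n + 1) → ℤ} :
    (fun x ↦ c + x) '' {x | 0 ≤ facetForm ℤ t x} = {x | ∀ i, 0 < facetForm ℤ t x i} ↔
      facetForm ℤ t c = facetGcd t :=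
  image_add_nonneg_eq_pos_iff (facetGcd_pos ht) (facetGcd_dvd_facetForm t)
    (exists_facetForm_eq_facetGcd t) (exists_facetForm_eq_zero_and_forall_ne_pos ht)

lemma facetForm_surjective (ht : ∀ i, 0 < t i) : Function.Surjective (facetForm ℝ t) :=
  surjective_of_map_eq_single (fun i ↦ Int.cast_ne_zero.2 (facetHeight_pos ht i).ne')
    (facetForm_ray ℝ t)

lemma exists_nonneg_sum_smul_ray_eq_iff (ht : ∀ i, 0 < t i) {x : Fin (n + 1) → ℝ} :
    (∃ b : Fin (n + 1) → ℝ, 0 ≤ b ∧ x = ∑ i, b i • ray ℝ t i) ↔ 0 ≤ facetForm ℝ t x :=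
  exists_nonneg_sum_smul_eq_iff
    (LinearMap.injective_iff_surjective.2 (facetForm_surjective ht))
    (fun i ↦ Int.cast_pos.2 (facetHeight_pos ht i)) (facetForm_ray ℝ t)

end FacetForm

section Homogenization

variable {n : ℕ}

/-- The sequence `(s, 1)`: the cone over the lecture hall polytope of `s`, with the height as last
coordinate, is the lecture hall cone of this sequence. -/
def homogenize (s : Fin n → ℤ) : Fin (n + 1) → ℤ :=
  Fin.snoc s 1

lemma ray_homogenize_castSucc (s : Fin n → ℤ) (i : Fin n) :
    ray ℝ (homogenize s) i.castSucc = Fin.snoc (lhpVertexR n s i) 1 := by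
  ext j
  cases j using Fin.lastCases <;> simp [ray, homogenize, lhpVertexR, Fin.le_last]

lemma ray_homogenize_last (s : Fin n → ℤ) :
    ray ℝ (homogenize s) (Fin.last n) = Fin.snoc 0 1 := by
  ext j
  cases j using Fin.lastCases <;> simp [ray, homogenize]

lemma sum_smul_ray_homogenize (s : Fin n → ℤ) (b : Fin (n + 1) → ℝ) :
    ∑ i, b i • ray ℝ (homogenize s) i =
      b (Fin.last n) • (Fin.snoc (0 : Fin n → ℝ) 1 : Fin (n + 1) → ℝ) +
        ∑ i : Fin n, b i.castSucc • (Fin.snoc (lhpVertexR n s i) 1 : Fin (n + 1) → ℝ) := by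
  simp only [Fin.sum_univ_castSucc, ray_homogenize_castSucc, ray_homogenize_last, add_comm]

variable {s : Fin n → ℤ}

lemma homogenize_pos (hs : ∀ i, 0 < s i) (i : Fin (n + 1)) : 0 < homogenize s i := by
  cases i using Fin.lastCases with
  | last => simp [homogenize]
  | cast i => simpa [homogenize] using hs i

theorem lhpCone_eq (hs : ∀ i, 0 < s i) :
    lhpCone n s = {x | 0 ≤ facetForm ℝ (homogenize s) x} := by
  ext x
  rw [Set.mem_ofPred_eq, ← exists_nonneg_sum_smul_ray_eq_iff (homogenize_pos hs)]
  constructor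
  · rintro ⟨a, b, ha, hb, rfl⟩
    refine ⟨Fin.snoc b a, fun i ↦ ?_, by simp [sum_smul_ray_homogenize]⟩
    cases i using Fin.lastCases with
    | last => simpa using ha
    | cast i => simpa using hb i
  · rintro ⟨b, hb, rfl⟩
    exact ⟨b (Fin.last n), fun i ↦ b i.castSucc, hb _, fun i ↦ hb _, sum_smul_ray_homogenize s b⟩

theorem lhpConeZ_eq (hs : ∀ i, 0 < s i) :
    lhpConeZ n s = {x | 0 ≤ facetForm ℤ (homogenize s) x} := by
  ext x
  simp only [lhpConeZ, lhpCone_eq hs, Set.mem_ofPred_eq, Pi.le_def, Pi.zero_apply,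
    facetForm_intCast, Int.cast_nonneg_iff]

theorem lhpConeInteriorZ_eq (hs : ∀ i, 0 < s i) :
    lhpConeInteriorZ n s = {x | ∀ i, 0 < facetForm ℤ (homogenize s) x i} := by
  ext x
  simp only [lhpConeInteriorZ, lhpCone_eq hs,
    interior_setOf_nonneg (facetForm_surjective (homogenize_pos hs)), Set.mem_ofPred_eq,
    facetForm_intCast, Int.cast_pos]

end Homogenization

section GcdChain

/-- `c` starts with `1` and satisfies `c_j s_k = c_k s_j + gcd(s_k, s_j)` for consecutive indices
`k`, `j`. This is the recurrence in the characterisation of the Gorenstein property, imposed there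
on `s` and on its reversal; the first condition is phrased so as to make sense for `n = 0`. -/
def IsGcdChain {n : ℕ} (s c : Fin n → ℤ) : Prop :=
  (∀ i : Fin n, (i : ℕ) = 0 → c i = 1) ∧
    ∀ k j : Fin n, (j : ℕ) = (k : ℕ) + 1 → c j * s k = c k * s j + (Int.gcd (s k) (s j) : ℤ)

lemma isGcdChain_succ_iff {n : ℕ} {s c : Fin (n + 1) → ℤ} :
    IsGcdChain s c ↔ c 0 = 1 ∧ ∀ k : Fin n,
      c k.succ * s k.castSucc = c k.castSucc * s k.succ +
        (Int.gcd (s k.castSucc) (s k.succ) : ℤ) := by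
  refine and_congr ⟨fun h ↦ h 0 rfl, ?_⟩ ⟨fun h k ↦ h _ _ (by simp), fun h k j hj ↦ ?_⟩
  · intro h i hi
    obtain rfl : i = 0 := Fin.ext hi
    exact h
  · obtain ⟨k, rfl⟩ : ∃ k' : Fin n, k'.castSucc = k := ⟨⟨k, by omega⟩, rfl⟩
    obtain rfl : j = k.succ := Fin.ext hj
    exact h k

lemma facetForm_eq_facetGcd_iff {n : ℕ} {t c : Fin (n + 1) → ℤ} :
    facetForm ℤ t c = facetGcd t ↔ IsGcdChain t c := by
  rw [isGcdChain_succ_iff, funext_iff, Fin.forall_fin_succ]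
  refine and_congr Iff.rfl (forall_congr' fun k ↦ ?_)
  simp only [facetForm_apply_succ, facetGcd, Fin.cons_succ, Int.cast_id]
  rw [sub_eq_iff_eq_add, mul_comm (t k.castSucc), mul_comm (t k.succ), add_comm]

lemma isGcdChain_homogenize_snoc_iff {n : ℕ} {s c : Fin (n + 1) → ℤ} {q : ℤ} :
    IsGcdChain (homogenize s) (Fin.snoc c q : Fin (n + 2) → ℤ) ↔
      IsGcdChain s c ∧ q * s (Fin.last n) = c (Fin.last n) + 1 := by
  rw [isGcdChain_succ_iff, isGcdChain_succ_iff, Fin.forall_fin_succ', and_assoc]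
  simp [homogenize, Fin.snoc_apply_zero, -Fin.castSucc_succ, Fin.succ_castSucc]

lemma exists_isGcdChain_homogenize_iff {n : ℕ} {s : Fin (n + 1) → ℤ} :
    (∃ c, IsGcdChain (homogenize s) c) ↔
      ∃ c, IsGcdChain s c ∧ s (Fin.last n) ∣ c (Fin.last n) + 1 := by
  constructor
  · rintro ⟨c, hc⟩
    rw [← Fin.snoc_init_self c, isGcdChain_homogenize_snoc_iff] at hc
    exact ⟨Fin.init c, hc.1, Dvd.intro_left _ hc.2⟩
  · rintro ⟨c, hc, q, hq⟩
    exact ⟨Fin.snoc c q, isGcdChain_homogenize_snoc_iff.2 ⟨hc, by rw [hq, mul_comm]⟩⟩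

end GcdChain

section Proportional

lemma mul_eq_mul_of_consecutive {R : Type*} [CommRing R] [IsDomain R] {n : ℕ}
    {s u : Fin (n + 1) → R} (hs : ∀ i, s i ≠ 0)
    (h : ∀ k : Fin n, u k.succ * s k.castSucc = u k.castSucc * s k.succ) (i j : Fin (n + 1)) :
    u i * s j = u j * s i := by
  have hzero (i : Fin (n + 1)) : u i * s 0 = u 0 * s i := by
    induction i using Fin.induction with
    | zero => rfl
    | succ k ih =>
      apply mul_right_cancel₀ (hs k.castSucc)
      linear_combination s 0 * h k + s k.succ * ih
  apply mul_right_cancel₀ (hs 0)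
  linear_combination s j * hzero i - s i * hzero j

lemma exists_eq_mul_of_gcd_eq_one {ι R : Type*} [Fintype ι] [CommRing R] [IsBezout R]
    [NormalizedGCDMonoid R] {s u : ι → R}
    (hgcd : Finset.univ.gcd s = 1) (h : ∀ i j, u i * s j = u j * s i) :
    ∃ q, ∀ i, u i = q * s i := by
  obtain ⟨a, ha⟩ := Finset.univ.gcd_eq_sum_mul s
  refine ⟨∑ j, a j * u j, fun i ↦ ?_⟩
  calc u i = u i * ∑ j, s j * a j := by rw [← ha, hgcd, mul_one]
    _ = ∑ j, a j * (u i * s j) := by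
      rw [Finset.mul_sum]
      exact Finset.sum_congr rfl fun j _ ↦ by ring
    _ = (∑ j, a j * u j) * s i := by
      rw [Finset.sum_mul]
      exact Finset.sum_congr rfl fun j _ ↦ by rw [h i j]; ring

end Proportional

theorem isGorenstein_iff_exists_isGcdChain {n : ℕ} {s : Fin (n + 1) → ℤ} (hs : ∀ i, 0 < s i) :
    IsGorenstein (n + 1) s ↔
      ∃ c, IsGcdChain s c ∧ s (Fin.last n) ∣ c (Fin.last n) + 1 := by
  simp only [IsGorenstein, lhpConeZ_eq hs, lhpConeInteriorZ_eq hs,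
    image_add_facetForm_nonneg_eq_pos_iff (homogenize_pos hs), facetForm_eq_facetGcd_iff,
    exists_isGcdChain_homogenize_iff]

section Reversal

variable {n : ℕ} {s c d : Fin (n + 1) → ℤ}

lemma isGcdChain_rev_iff :
    IsGcdChain (fun i ↦ s i.rev) d ↔ d 0 = 1 ∧ ∀ k : Fin n,
      d k.castSucc.rev * s k.succ = d k.succ.rev * s k.castSucc +
        (Int.gcd (s k.castSucc) (s k.succ) : ℤ) := by
  rw [isGcdChain_succ_iff, ← Fin.revPerm.forall_congr_right]
  simp only [Fin.revPerm_apply, Fin.rev_castSucc, Fin.rev_succ, Fin.rev_rev, Int.gcd_comm]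

lemma IsGcdChain.rev {q : ℤ} (hc : IsGcdChain s c) (hq : c (Fin.last n) + 1 = s (Fin.last n) * q) :
    IsGcdChain (fun i ↦ s i.rev) (fun i ↦ q * s i.rev - c i.rev) := by
  refine isGcdChain_rev_iff.2 ⟨?_, fun k ↦ ?_⟩
  · rw [Fin.rev_zero]
    linear_combination -hq
  · simp only [Fin.rev_rev]
    linear_combination (isGcdChain_succ_iff.1 hc).2 k

lemma IsGcdChain.dvd_add_one (hs : ∀ i, s i ≠ 0) (hgcd : Finset.univ.gcd s = 1)
    (hc : IsGcdChain s c) (hd : IsGcdChain (fun i ↦ s i.rev) d) :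
    s (Fin.last n) ∣ c (Fin.last n) + 1 := by
  obtain ⟨hd_zero, hd_step⟩ := isGcdChain_rev_iff.1 hd
  have consecutive (k : Fin n) : (c k.succ + d k.succ.rev) * s k.castSucc =
      (c k.castSucc + d k.castSucc.rev) * s k.succ := by
    linear_combination (isGcdChain_succ_iff.1 hc).2 k - hd_step k
  obtain ⟨q, hq⟩ := exists_eq_mul_of_gcd_eq_one hgcd
    (mul_eq_mul_of_consecutive (u := fun i ↦ c i + d i.rev) hs consecutive)
  have hlast := hq (Fin.last n)
  rw [Fin.rev_last, hd_zero] at hlast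
  exact Dvd.intro_left q hlast.symm

theorem exists_isGcdChain_dvd_iff (hs : ∀ i, s i ≠ 0) (hgcd : Finset.univ.gcd s = 1) :
    (∃ c, IsGcdChain s c ∧ s (Fin.last n) ∣ c (Fin.last n) + 1) ↔
      ∃ c d, IsGcdChain s c ∧ IsGcdChain (fun i ↦ s i.rev) d := by
  constructor
  · rintro ⟨c, hc, q, hq⟩
    exact ⟨c, _, hc, hc.rev hq⟩
  · rintro ⟨c, d, hc, hd⟩
    exact ⟨c, hc, hc.dvd_add_one hs hgcd hd⟩

end Reversal

lemma gcd_eq_one_of_gcd_pair_eq_one {ι : Type*} [Fintype ι] {s : ι → ℤ} {k j : ι}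
    (h : Int.gcd (s k) (s j) = 1) : Finset.univ.gcd s = 1 := by
  have hdvd (i : ι) : Finset.univ.gcd s ∣ s i := Finset.gcd_dvd (Finset.mem_univ i)
  rw [← Finset.normalize_gcd, normalize_eq_one]
  exact (Int.isCoprime_iff_gcd_eq_one.2 h).isUnit_of_dvd' (hdvd k) (hdvd j)

end LectureHall

theorem lhp_gorenstein_iff_of_coprime_pair_general (n : ℕ) (s : Fin n → ℤ)
    (hs : ∀ i, 0 < s i) (hgcd : Finset.univ.gcd s = 1) :
    IsGorenstein n s ↔
      ∃ c d : Fin n → ℤ,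
        (∀ i : Fin n, (i : ℕ) = 0 → c i = 1) ∧
        (∀ i : Fin n, (i : ℕ) = 0 → d i = 1) ∧
        (∀ k j : Fin n, (j : ℕ) = (k : ℕ) + 1 →
          c j * s k = c k * s j + (Int.gcd (s k) (s j) : ℤ)) ∧
        (∀ k j : Fin n, (j : ℕ) = (k : ℕ) + 1 →
          d j * s k.rev = d k * s j.rev + (Int.gcd (s k.rev) (s j.rev) : ℤ)) := by
  cases n with
  | zero => simp at hgcd
  | succ n =>
    rw [LectureHall.isGorenstein_iff_exists_isGcdChain hs,
      LectureHall.exists_isGcdChain_dvd_iff (fun i ↦ (hs i).ne') hgcd]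
    exact exists₂_congr fun c d ↦ by simp only [LectureHall.IsGcdChain, and_assoc, and_left_comm]

theorem lhp_gorenstein_iff_of_coprime_pair (n : ℕ) (s : Fin n → ℤ)
    (hs : ∀ i, 0 < s i)
    (hcop : ∃ k j : Fin n, (j : ℕ) = (k : ℕ) + 1 ∧ Int.gcd (s k) (s j) = 1) :
    IsGorenstein n s ↔
      ∃ c d : Fin n → ℤ,
        (∀ i : Fin n, (i : ℕ) = 0 → c i = 1) ∧
        (∀ i : Fin n, (i : ℕ) = 0 → d i = 1) ∧
        (∀ k j : Fin n, (j : ℕ) = (k : ℕ) + 1 →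
          c j * s k = c k * s j + (Int.gcd (s k) (s j) : ℤ)) ∧
        (∀ k j : Fin n, (j : ℕ) = (k : ℕ) + 1 →
          d j * s k.rev = d k * s j.rev + (Int.gcd (s k.rev) (s j.rev) : ℤ)) := by
  obtain ⟨k, j, -, hkj⟩ := hcop
  exact lhp_gorenstein_iff_of_coprime_pair_general n s hs
    (LectureHall.gcd_eq_one_of_gcd_pair_eq_one hkj)
end

section
/- Let s = (s_1,…,s_n) be a sequence of positive integers and let r = max{ asc(e) : e ∈ I_n^(s) }. Then the s-lecture hall polytope P_n^(s) is level if and only if for every k with 1 ≤ k < r and every e ∈ I_{n,k}^(s), there exists e' ∈ I_{n,1}^(s) such that e + e' ∈ I_{n,k+1}^(s). -/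
open scoped BigOperators

/-!
In the coordinates with respect to the generators `(v_i, 1)`, the cone over `P_n^(s)` is the
nonnegative orthant and its fundamental parallelepiped is the half-open unit cube. A lattice point
modulo the generators is an inversion sequence, and `e ↦ λ(e)` picks the representative in the
parallelepiped, at height `asc e`.

The reflection `x ↦ (1, …, 1) - x` in these coordinates identifies the minimal interior lattice
points with the maximal points of the parallelepiped, so `P_n^(s)` is level if and only if every
lattice point of the parallelepiped lies below one of the greatest height `r`. Truncating the ratios
`x_i / s_i` at `1` shows that such a climb can be made in steps of height one, and
`λ(e) + λ(e')` stays in the parallelepiped exactly when `asc (e + e') = asc e + asc e'`.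
-/

namespace LectureHall

section BackwardDifference

variable {R : Type*} {n : ℕ}

/-- The linear map `y ↦ (y 0, y 1 - y 0, …, y n - y (n - 1))` taking a finite sequence to its
consecutive differences, with the convention `y (-1) = 0`. -/
def backwardDiff (R : Type*) [Ring R] (n : ℕ) : (Fin (n + 1) → R) →ₗ[R] (Fin (n + 1) → R) where
  toFun y := Fin.cons (y 0) fun i => y i.succ - y i.castSucc
  map_add' y z := by
    ext i
    cases i using Fin.cases <;> simp [add_sub_add_comm]
  map_smul' c y := by
    ext i
    cases i using Fin.cases <;> simp [mul_sub]

section Ring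

variable [Ring R]

@[simp]
lemma backwardDiff_zero (y : Fin (n + 1) → R) : backwardDiff R n y 0 = y 0 := rfl

@[simp]
lemma backwardDiff_succ (y : Fin (n + 1) → R) (i : Fin n) :
    backwardDiff R n y i.succ = y i.succ - y i.castSucc := rfl

lemma sum_backwardDiff (y : Fin (n + 1) → R) :
    ∑ i, backwardDiff R n y i = y (Fin.last n) := by
  have hshift : y 0 + ∑ i : Fin n, y i.succ = ∑ i : Fin n, y i.castSucc + y (Fin.last n) := by
    rw [← Fin.sum_univ_succ, Fin.sum_univ_castSucc]
  simp only [Fin.sum_univ_succ, backwardDiff_zero, backwardDiff_succ, Finset.sum_sub_distrib]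
  rw [← add_sub_assoc, hshift, add_sub_cancel_left]

lemma backwardDiff_injective : Function.Injective (backwardDiff R n) := by
  refine (injective_iff_map_eq_zero _).2 fun y hy => funext fun i => ?_
  induction i using Fin.induction with
  | zero => exact congrFun hy 0
  | succ i ih =>
    have hstep : y i.succ - y i.castSucc = 0 := congrFun hy i.succ
    exact (sub_eq_zero.1 hstep).trans ih

lemma backwardDiff_intCast (z : Fin (n + 1) → ℤ) (i : Fin (n + 1)) :
    backwardDiff R n (fun j => (z j : R)) i = (backwardDiff ℤ n z i : ℤ) := by
  cases i using Fin.cases <;> simp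

lemma backwardDiff_indicator_ge (i : Fin (n + 1)) :
    backwardDiff R n (fun j => if i ≤ j then 1 else 0) = Pi.single i 1 := by
  ext j
  cases j using Fin.cases with
  | zero => simp [Pi.single_apply, eq_comm]
  | succ j =>
    rcases lt_trichotomy i j.succ with h | rfl | h
    · simp [h.le, h.ne', Fin.le_castSucc_iff.2 h]
    · simp [Fin.castSucc_lt_succ.not_ge]
    · simp [h.ne, h.not_ge, (Fin.castSucc_lt_succ.trans h).not_ge]

end Ring

section LinearOrderedRing

variable [Ring R] [LinearOrder R] [IsOrderedRing R] {c : R} {y : Fin (n + 1) → R}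

lemma abs_backwardDiff_lt (hy : ∀ i, y i ∈ Set.Ico 0 c) (i : Fin (n + 1)) :
    |backwardDiff R n y i| < c := by
  cases i using Fin.cases with
  | zero => rw [backwardDiff_zero, abs_of_nonneg (hy 0).1]; exact (hy 0).2
  | succ i => exact abs_sub_lt_of_nonneg_of_lt (hy _).1 (hy _).2 (hy _).1 (hy _).2

lemma backwardDiff_min_mem_Icc (hc : 0 ≤ c) (hy : 0 ≤ backwardDiff R n y) :
    backwardDiff R n (fun i => min (y i) c) ∈ Set.Icc 0 (backwardDiff R n y) := by
  have hstep (i : Fin n) : y i.castSucc ≤ y i.succ := sub_nonneg.1 (hy i.succ)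
  refine ⟨fun i => ?_, fun i => ?_⟩ <;> cases i using Fin.cases
  case refine_1.zero => exact le_min (hy 0) hc
  case refine_2.zero => exact min_le_left _ _
  case refine_1.succ i => exact sub_nonneg.2 (min_le_min_right c (hstep i))
  case refine_2.succ i =>
    rw [backwardDiff_succ, backwardDiff_succ]
    rcases le_total (y i.castSucc) c with h | h
    · rw [min_eq_left h]
      exact sub_le_sub_right (min_le_left _ _) _
    · rw [min_eq_right h, min_eq_right (h.trans (hstep i)), sub_self]
      exact sub_nonneg.2 (hstep i)

end LinearOrderedRing

end BackwardDifference

lemma interior_setOf_nonneg_s2 {X ι : Type*} [TopologicalSpace X] [Finite ι] {f : X → ι → ℝ}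
    (hf : Continuous f) (hfo : IsOpenMap f) :
    interior {x | 0 ≤ f x} = {x | ∀ i, 0 < f x i} := by
  change interior (f ⁻¹' Set.Ici 0) = _
  rw [← hfo.preimage_interior_eq_interior_preimage hf, ← Set.pi_univ_Ici,
    interior_pi_set Set.finite_univ]
  ext x
  simp

section Fract

variable {R : Type*} [Ring R] [LinearOrder R] [IsStrictOrderedRing R] [FloorRing R]

lemma fract_neg_add_self (a : R) : Int.fract (-a) + a = ⌈a⌉ := by
  rw [Int.fract, Int.floor_neg, Int.cast_neg]
  abel

lemma fract_neg_of_abs_lt_one {a : R} (ha : |a| < 1) :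
    Int.fract (-a) = (if 0 < a then 1 else 0) - a := by
  obtain ⟨hlo, hhi⟩ := abs_lt.1 ha
  split_ifs with h
  · exact Int.fract_eq_iff.2 ⟨sub_nonneg.2 hhi.le, sub_lt_self 1 h, -1, by push_cast; abel⟩
  · rw [zero_sub, Int.fract_eq_self]
    exact ⟨neg_nonneg.2 (not_lt.1 h), neg_lt.1 hlo⟩

end Fract

variable {n : ℕ} {s : Fin n → ℤ}

/-- The sequence `s` extended by `s_{n+1} = 1`, so that `cone(P_n^(s))` becomes the lecture hall
cone `0 ≤ x_1/s_1 ≤ ⋯ ≤ x_{n+1}/s_{n+1}`. -/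
def extWeight (s : Fin n → ℤ) : Fin (n + 1) → ℤ := Fin.snoc s 1

@[simp]
lemma extWeight_castSucc (i : Fin n) : extWeight s i.castSucc = s i := Fin.snoc_castSucc ..

@[simp]
lemma extWeight_last : extWeight s (Fin.last n) = 1 := Fin.snoc_last ..

lemma extWeight_pos (hs : ∀ i, 0 < s i) (i : Fin (n + 1)) : 0 < extWeight s i := by
  cases i using Fin.lastCases <;> simp [hs]

/-- The generators `(v_i, 1)` of `cone(P_n^(s))` as lattice points; the last one, `(0, 1)`, is the
apex of `P_n^(s)` at height one. -/
def coneGen (s : Fin n → ℤ) (i : Fin (n + 1)) : Fin (n + 1) → ℤ :=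
  fun j => if i ≤ j then extWeight s j else 0

lemma intCast_coneGen_castSucc (i : Fin n) :
    (fun j => (coneGen s i.castSucc j : ℝ)) = Fin.snoc (lhpVertexR n s i) 1 := by
  ext j
  cases j using Fin.lastCases <;> simp [coneGen, lhpVertexR, Fin.le_last]

lemma intCast_coneGen_last :
    (fun j => (coneGen s (Fin.last n) j : ℝ)) = Fin.snoc (0 : Fin n → ℝ) 1 := by
  ext j
  cases j using Fin.lastCases <;> simp [coneGen, (Fin.castSucc_lt_last _).ne]

/-- The linear map `x ↦ (x_i / s_i)_i`, where `s_{n+1} = 1`. -/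
noncomputable def ratio (s : Fin n → ℤ) : (Fin (n + 1) → ℝ) →ₗ[ℝ] (Fin (n + 1) → ℝ) where
  toFun x i := x i / extWeight s i
  map_add' _ _ := funext fun _ => add_div ..
  map_smul' _ _ := funext fun _ => mul_div_assoc ..

lemma ratio_apply (x : Fin (n + 1) → ℝ) (i : Fin (n + 1)) :
    ratio s x i = x i / extWeight s i := rfl

lemma ratio_injective (hs : ∀ i, 0 < s i) : Function.Injective (ratio s) := fun _ _ h =>
  funext fun i => (div_left_inj' (Int.cast_ne_zero.2 (extWeight_pos hs i).ne')).1 (congrFun h i)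

/-- The coordinates of a point of `ℝ^{n+1}` with respect to the generators of `cone(P_n^(s))`. -/
noncomputable def coneCoord (s : Fin n → ℤ) : (Fin (n + 1) → ℝ) →ₗ[ℝ] (Fin (n + 1) → ℝ) :=
  backwardDiff ℝ n ∘ₗ ratio s

lemma coneCoord_apply (x : Fin (n + 1) → ℝ) : coneCoord s x = backwardDiff ℝ n (ratio s x) := rfl

lemma coneCoord_injective (hs : ∀ i, 0 < s i) : Function.Injective (coneCoord s) :=
  backwardDiff_injective.comp (ratio_injective hs)

lemma coneCoord_coneGen (hs : ∀ i, 0 < s i) (i : Fin (n + 1)) :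
    coneCoord s (fun j => (coneGen s i j : ℝ)) = Pi.single i 1 := by
  rw [coneCoord_apply, ← backwardDiff_indicator_ge]
  congr 1
  ext j
  have hj : (extWeight s j : ℝ) ≠ 0 := Int.cast_ne_zero.2 (extWeight_pos hs j).ne'
  by_cases h : i ≤ j <;> simp [ratio_apply, coneGen, h, hj]

lemma eq_combination_iff (hs : ∀ i, 0 < s i) (x : Fin (n + 1) → ℝ) (a : ℝ) (b : Fin n → ℝ) :
    x = a • (Fin.snoc (0 : Fin n → ℝ) 1 : Fin (n + 1) → ℝ) +
        ∑ i : Fin n, b i • (Fin.snoc (lhpVertexR n s i) 1 : Fin (n + 1) → ℝ) ↔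
      coneCoord s x = Fin.snoc b a := by
  rw [← (coneCoord_injective hs).eq_iff]
  simp only [map_add, map_sum, map_smul, ← intCast_coneGen_last (s := s),
    ← intCast_coneGen_castSucc, coneCoord_coneGen hs]
  suffices h : a • Pi.single (Fin.last n) (1 : ℝ) +
      ∑ i : Fin n, b i • Pi.single i.castSucc (1 : ℝ) = (Fin.snoc b a : Fin (n + 1) → ℝ) by rw [h]
  ext j
  cases j using Fin.lastCases <;> simp [Pi.single_apply, (Fin.castSucc_lt_last _).ne']

lemma exists_combination_iff (hs : ∀ i, 0 < s i) (p : ℝ → Prop) (x : Fin (n + 1) → ℝ) :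
    (∃ (a : ℝ) (b : Fin n → ℝ), p a ∧ (∀ i, p (b i)) ∧
      x = a • (Fin.snoc (0 : Fin n → ℝ) 1 : Fin (n + 1) → ℝ) +
        ∑ i : Fin n, b i • (Fin.snoc (lhpVertexR n s i) 1 : Fin (n + 1) → ℝ)) ↔
      ∀ i, p (coneCoord s x i) := by
  simp only [eq_combination_iff hs, Fin.forall_fin_succ']
  constructor
  · rintro ⟨a, b, ha, hb, h⟩
    simpa only [h, Fin.snoc_castSucc, Fin.snoc_last] using ⟨hb, ha⟩
  · rintro ⟨hb, ha⟩
    exact ⟨_, _, ha, hb, (Fin.snoc_init_self _).symm⟩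

lemma mem_lhpCone_iff (hs : ∀ i, 0 < s i) {x : Fin (n + 1) → ℝ} :
    x ∈ lhpCone n s ↔ 0 ≤ coneCoord s x := exists_combination_iff hs (0 ≤ ·) x

lemma mem_fpp_iff (hs : ∀ i, 0 < s i) {x : Fin (n + 1) → ℝ} :
    x ∈ fpp n s ↔ ∀ i, coneCoord s x i ∈ Set.Ico 0 1 :=
  exists_combination_iff hs (· ∈ Set.Ico 0 1) x

lemma mem_interior_lhpCone_iff (hs : ∀ i, 0 < s i) {x : Fin (n + 1) → ℝ} :
    x ∈ interior (lhpCone n s) ↔ ∀ i, 0 < coneCoord s x i := by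
  have hcone : lhpCone n s = {x | 0 ≤ coneCoord s x} := Set.ext fun _ => mem_lhpCone_iff hs
  have hsurj := LinearMap.surjective_of_injective (coneCoord_injective hs)
  rw [hcone, interior_setOf_nonneg_s2 (coneCoord s).continuous_of_finiteDimensional
    ((coneCoord s).isOpenMap_of_finiteDimensional hsurj)]
  rfl

/-- The coordinates of a lattice point with respect to the generators of `cone(P_n^(s))`. The
pointwise order on these coordinates is the partial order on `ℤ^{n+1}` defined by the cone. -/
noncomputable def latticeCoord (s : Fin n → ℤ) : (Fin (n + 1) → ℤ) →+ (Fin (n + 1) → ℝ) :=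
  (coneCoord s).toAddMonoidHom.comp ((Int.castAddHom ℝ).compLeft (Fin (n + 1)))

lemma latticeCoord_apply (x : Fin (n + 1) → ℤ) :
    latticeCoord s x = backwardDiff ℝ n (ratio s fun i => (x i : ℝ)) := rfl

lemma latticeCoord_injective (hs : ∀ i, 0 < s i) : Function.Injective (latticeCoord s) :=
  (coneCoord_injective hs).comp (Function.Injective.comp_left Int.cast_injective)

lemma latticeCoord_coneGen (hs : ∀ i, 0 < s i) (i : Fin (n + 1)) :
    latticeCoord s (coneGen s i) = Pi.single i 1 := coneCoord_coneGen hs i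

lemma sum_latticeCoord (x : Fin (n + 1) → ℤ) :
    ∑ i, latticeCoord s x i = x (Fin.last n) := by
  rw [latticeCoord_apply, sum_backwardDiff, ratio_apply, extWeight_last, Int.cast_one, div_one]

lemma last_le_last_of_latticeCoord_le {x y : Fin (n + 1) → ℤ}
    (hxy : latticeCoord s x ≤ latticeCoord s y) : x (Fin.last n) ≤ y (Fin.last n) := by
  have hsum := Finset.sum_le_sum fun i (_ : i ∈ Finset.univ) => hxy i
  rw [sum_latticeCoord, sum_latticeCoord] at hsum
  exact_mod_cast hsum

lemma eq_of_latticeCoord_le_of_last_eq (hs : ∀ i, 0 < s i) {x y : Fin (n + 1) → ℤ}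
    (hxy : latticeCoord s x ≤ latticeCoord s y) (hlast : x (Fin.last n) = y (Fin.last n)) :
    x = y := by
  refine latticeCoord_injective hs (funext fun i => ?_)
  refine (Finset.sum_eq_sum_iff_of_le fun i _ => hxy i).1 ?_ i (Finset.mem_univ i)
  rw [sum_latticeCoord, sum_latticeCoord, hlast]

lemma exists_latticeCoord_eq_intCast (hs : ∀ i, 0 < s i) {x : Fin (n + 1) → ℤ}
    (hx : ∀ i : Fin n, s i ∣ x i.castSucc) (i : Fin (n + 1)) : ∃ z : ℤ, latticeCoord s x i = z := by
  have hdvd (j : Fin (n + 1)) : extWeight s j ∣ x j := by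
    cases j using Fin.lastCases <;> simp [hx]
  choose z hz using hdvd
  have hratio : (ratio s fun j => (x j : ℝ)) = fun j => (z j : ℝ) := by
    ext j
    have hj : (extWeight s j : ℝ) ≠ 0 := Int.cast_ne_zero.2 (extWeight_pos hs j).ne'
    rw [ratio_apply, hz, Int.cast_mul, mul_div_cancel_left₀ _ hj]
  exact ⟨backwardDiff ℤ n z i, by rw [latticeCoord_apply, hratio, backwardDiff_intCast]⟩

/-- The lattice points of the fundamental parallelepiped. -/
def fppZ (n : ℕ) (s : Fin n → ℤ) : Set (Fin (n + 1) → ℤ) :=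
  {x | (fun i => (x i : ℝ)) ∈ fpp n s}

lemma mem_fppZ_iff (hs : ∀ i, 0 < s i) {x : Fin (n + 1) → ℤ} :
    x ∈ fppZ n s ↔ ∀ i, latticeCoord s x i ∈ Set.Ico 0 1 := mem_fpp_iff hs

lemma mem_lhpConeZ_iff (hs : ∀ i, 0 < s i) {x : Fin (n + 1) → ℤ} :
    x ∈ lhpConeZ n s ↔ 0 ≤ latticeCoord s x := mem_lhpCone_iff hs

lemma mem_lhpConeInteriorZ_iff (hs : ∀ i, 0 < s i) {x : Fin (n + 1) → ℤ} :
    x ∈ lhpConeInteriorZ n s ↔ ∀ i, 0 < latticeCoord s x i := mem_interior_lhpCone_iff hs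

lemma latticeCoord_nonneg_of_mem_fppZ (hs : ∀ i, 0 < s i) {x : Fin (n + 1) → ℤ}
    (hx : x ∈ fppZ n s) : 0 ≤ latticeCoord s x := fun i => ((mem_fppZ_iff hs).1 hx i).1

lemma mem_fppZ_of_latticeCoord_le (hs : ∀ i, 0 < s i) {x y : Fin (n + 1) → ℤ}
    (hx : 0 ≤ latticeCoord s x) (hxy : latticeCoord s x ≤ latticeCoord s y) (hy : y ∈ fppZ n s) :
    x ∈ fppZ n s :=
  (mem_fppZ_iff hs).2 fun i => ⟨hx i, (hxy i).trans_lt ((mem_fppZ_iff hs).1 hy i).2⟩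

lemma exists_latticeCoord_mem_Icc_of_one_le_last (hs : ∀ i, 0 < s i) {v : Fin (n + 1) → ℤ}
    (hv : 0 ≤ latticeCoord s v) (hlast : 1 ≤ v (Fin.last n)) :
    ∃ u : Fin (n + 1) → ℤ, u (Fin.last n) = 1 ∧
      latticeCoord s u ∈ Set.Icc 0 (latticeCoord s v) := by
  -- Truncating the ratios of `v` at `1` cuts off a lattice point of height one.
  refine ⟨fun i => min (v i) (extWeight s i), by simpa using hlast, ?_⟩
  have hratio : (ratio s fun i => ((min (v i) (extWeight s i) : ℤ) : ℝ)) =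
      fun i => min (ratio s (fun i => (v i : ℝ)) i) 1 := by
    ext i
    have hi : (0 : ℝ) < extWeight s i := Int.cast_pos.2 (extWeight_pos hs i)
    rw [ratio_apply, ratio_apply, Int.cast_min, ← min_div_div_right hi.le, div_self hi.ne']
  rw [latticeCoord_apply, latticeCoord_apply, hratio]
  exact backwardDiff_min_mem_Icc zero_le_one hv

/-- The inversion sequence recording a lattice point modulo the lattice spanned by the generators
of `cone(P_n^(s))`; the sign makes it a left inverse of `lamOf`. -/
def invSeqOf (s : Fin n → ℤ) (x : Fin (n + 1) → ℤ) : Fin n → ℤ := fun i => -x i.castSucc % s i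

lemma isInvSeq_emod (hs : ∀ i, 0 < s i) (x : Fin n → ℤ) : IsInvSeq n s fun i => x i % s i :=
  fun i => ⟨Int.emod_nonneg _ (hs i).ne', Int.emod_lt_of_pos _ (hs i)⟩

lemma isInvSeq_invSeqOf (hs : ∀ i, 0 < s i) (x : Fin (n + 1) → ℤ) :
    IsInvSeq n s (invSeqOf s x) := isInvSeq_emod hs _

lemma invSeqOf_add (x y : Fin (n + 1) → ℤ) :
    invSeqOf s (x + y) = invAdd n s (invSeqOf s x) (invSeqOf s y) := by
  ext i
  simp only [invSeqOf, invAdd, Pi.add_apply, neg_add, Int.emod_add_emod, Int.add_emod_emod]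

lemma invSeqOf_lamOf {e : Fin n → ℤ} (he : IsInvSeq n s e) : invSeqOf s (lamOf n s e) = e := by
  ext i
  rw [invSeqOf, lamOf, Fin.snoc_castSucc, neg_sub, mul_comm, Int.sub_mul_emod_self_left]
  exact Int.emod_eq_of_lt (he i).1 (he i).2

lemma dvd_add_invSeqOf (x : Fin (n + 1) → ℤ) (i : Fin n) :
    s i ∣ x i.castSucc + invSeqOf s x i := by
  have h : s i ∣ invSeqOf s x i - -x i.castSucc := Int.dvd_emod_sub_self
  rwa [sub_neg_eq_add, add_comm] at h

/-- A sequence placed at height zero in `ℤ^{n+1}`. For an inversion sequence `e`, the point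
`-heightZero e` is congruent to `lamOf n s e` modulo the generators of the cone. -/
def heightZero (e : Fin n → ℤ) : Fin (n + 1) → ℤ := Fin.snoc e 0

@[simp]
lemma heightZero_castSucc (e : Fin n → ℤ) (i : Fin n) : heightZero e i.castSucc = e i :=
  Fin.snoc_castSucc ..

@[simp]
lemma heightZero_last (e : Fin n → ℤ) : heightZero e (Fin.last n) = 0 := Fin.snoc_last ..

lemma ratio_heightZero_mem_Ico {e : Fin n → ℤ} (he : IsInvSeq n s e) (i : Fin (n + 1)) :
    ratio s (fun j => (heightZero e j : ℝ)) i ∈ Set.Ico 0 1 := by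
  cases i using Fin.lastCases with
  | last => simp [ratio_apply]
  | cast i =>
    have h0 : (0 : ℝ) ≤ e i := Int.cast_nonneg (he i).1
    have h1 : (e i : ℝ) < s i := Int.cast_lt.2 (he i).2
    simpa [ratio_apply] using
      (⟨div_nonneg h0 (h0.trans h1.le), (div_lt_one (h0.trans_lt h1)).2 h1⟩ :
        0 ≤ (e i : ℝ) / s i ∧ (e i : ℝ) / s i < 1)

lemma abs_latticeCoord_heightZero_lt_one {e : Fin n → ℤ} (he : IsInvSeq n s e) (i : Fin (n + 1)) :
    |latticeCoord s (heightZero e) i| < 1 :=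
  abs_backwardDiff_lt (ratio_heightZero_mem_Ico he) i

lemma latticeCoord_heightZero_last_nonpos {e : Fin n → ℤ} (he : IsInvSeq n s e) :
    latticeCoord s (heightZero e) (Fin.last n) ≤ 0 := by
  have hlast : ratio s (fun j => (heightZero e j : ℝ)) (Fin.last n) = 0 := by simp [ratio_apply]
  rw [latticeCoord_apply]
  cases n with
  | zero => exact hlast.le
  | succ n =>
    rw [← Fin.succ_last, backwardDiff_succ, Fin.succ_last, hlast, zero_sub, neg_nonpos]
    exact (ratio_heightZero_mem_Ico he _).1

lemma latticeCoord_heightZero_castSucc (e : Fin n → ℤ) (i : Fin n) :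
    latticeCoord s (heightZero e) i.castSucc = (invRatio n s e i - prevRatio n s e i : ℚ) := by
  have hratio (j : Fin n) :
      ratio s (fun k => (heightZero e k : ℝ)) j.castSucc = (invRatio n s e j : ℚ) := by
    simp [ratio_apply, invRatio]
  rw [latticeCoord_apply, Rat.cast_sub, ← hratio]
  cases n with
  | zero => exact i.elim0
  | succ n =>
    cases i using Fin.cases with
    | zero => simp [prevRatio]
    | succ i =>
      have hprev : prevRatio (n + 1) s e i.succ = invRatio (n + 1) s e i.castSucc :=
        if_neg (Nat.succ_ne_zero i)
      rw [hprev, ← hratio]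
      rfl

lemma mem_ascSet_iff (e : Fin n → ℤ) (i : Fin n) :
    i ∈ ascSet n s e ↔ 0 < latticeCoord s (heightZero e) i.castSucc := by
  rw [latticeCoord_heightZero_castSucc, Rat.cast_pos, sub_pos, ascSet, Finset.mem_filter_univ]

lemma lamOf_eq_sum_coneGen_sub (e : Fin n → ℤ) :
    lamOf n s e = ∑ i ∈ ascSet n s e, coneGen s i.castSucc - heightZero e := by
  ext j
  cases j using Fin.lastCases with
  | last => simp [lamOf, asc, coneGen, Fin.le_last]
  | cast j => simp [lamOf, coneGen, Finset.sum_ite]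

lemma latticeCoord_lamOf (hs : ∀ i, 0 < s i) {e : Fin n → ℤ} (he : IsInvSeq n s e)
    (i : Fin (n + 1)) :
    latticeCoord s (lamOf n s e) i = Int.fract (-latticeCoord s (heightZero e) i) := by
  rw [fract_neg_of_abs_lt_one (abs_latticeCoord_heightZero_lt_one he i), lamOf_eq_sum_coneGen_sub,
    map_sub, map_sum, Pi.sub_apply, Finset.sum_apply]
  congr 1
  simp only [latticeCoord_coneGen hs, Pi.single_apply]
  cases i using Fin.lastCases with
  | last =>
    rw [if_neg (latticeCoord_heightZero_last_nonpos he).not_gt]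
    exact Finset.sum_eq_zero fun j _ => if_neg (Fin.castSucc_lt_last j).ne'
  | cast i => simp [← mem_ascSet_iff]

lemma lamOf_mem_fppZ (hs : ∀ i, 0 < s i) {e : Fin n → ℤ} (he : IsInvSeq n s e) :
    lamOf n s e ∈ fppZ n s := (mem_fppZ_iff hs).2 fun i => by
  rw [latticeCoord_lamOf hs he]
  exact ⟨Int.fract_nonneg _, Int.fract_lt_one _⟩

/-- Both points are congruent modulo the lattice spanned by the generators. -/
lemma latticeCoord_lamOf_invSeqOf (hs : ∀ i, 0 < s i) (x : Fin (n + 1) → ℤ) (i : Fin (n + 1)) :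
    latticeCoord s (lamOf n s (invSeqOf s x)) i = Int.fract (latticeCoord s x i) := by
  have hdvd (j : Fin n) : s j ∣ (x + heightZero (invSeqOf s x)) j.castSucc := by
    simpa using dvd_add_invSeqOf x j
  obtain ⟨z, hz⟩ := exists_latticeCoord_eq_intCast hs hdvd i
  rw [map_add, Pi.add_apply] at hz
  rw [latticeCoord_lamOf hs (isInvSeq_invSeqOf hs x)]
  exact (Int.fract_eq_fract.2 ⟨z, by rw [sub_neg_eq_add, hz]⟩).symm

lemma lamOf_invSeqOf (hs : ∀ i, 0 < s i) {x : Fin (n + 1) → ℤ} (hx : x ∈ fppZ n s) :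
    lamOf n s (invSeqOf s x) = x := by
  refine latticeCoord_injective hs (funext fun i => ?_)
  rw [latticeCoord_lamOf_invSeqOf hs, Int.fract_eq_self]
  exact (mem_fppZ_iff hs).1 hx i

lemma fppZ_eq_image_lamOf (hs : ∀ i, 0 < s i) :
    fppZ n s = lamOf n s '' {e | IsInvSeq n s e} := by
  refine Set.Subset.antisymm (fun x hx => ?_) (Set.image_subset_iff.2 fun e he => ?_)
  · exact ⟨invSeqOf s x, isInvSeq_invSeqOf hs x, lamOf_invSeqOf hs hx⟩
  · exact lamOf_mem_fppZ hs he

lemma finite_fppZ (hs : ∀ i, 0 < s i) : (fppZ n s).Finite := by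
  rw [fppZ_eq_image_lamOf hs]
  exact ((Set.finite_Icc 0 s).subset fun e he =>
    ⟨fun i => (he i).1, fun i => (he i).2.le⟩).image _

lemma lamOf_last (e : Fin n → ℤ) : lamOf n s e (Fin.last n) = asc n s e := Fin.snoc_last ..

lemma asc_invSeqOf (hs : ∀ i, 0 < s i) {x : Fin (n + 1) → ℤ} (hx : x ∈ fppZ n s) :
    (asc n s (invSeqOf s x) : ℤ) = x (Fin.last n) := by
  rw [← lamOf_last, lamOf_invSeqOf hs hx]

lemma isGreatest_last_fppZ (hs : ∀ i, 0 < s i) {r : ℕ}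
    (hr : IsGreatest {k : ℕ | ∃ e : Fin n → ℤ, IsInvSeq n s e ∧ asc n s e = k} r) :
    IsGreatest ((fun x => x (Fin.last n)) '' fppZ n s) (r : ℤ) := by
  have himage : (fun x => x (Fin.last n)) '' fppZ n s =
      Nat.cast '' {k : ℕ | ∃ e : Fin n → ℤ, IsInvSeq n s e ∧ asc n s e = k} := by
    rw [fppZ_eq_image_lamOf hs, Set.image_image]
    simp only [lamOf_last]
    exact (Set.image_image Nat.cast (asc n s) {e | IsInvSeq n s e}).symm
  rw [himage]
  exact Nat.mono_cast.map_isGreatest hr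

lemma latticeCoord_lamOf_invSeqOf_le (hs : ∀ i, 0 < s i) {x : Fin (n + 1) → ℤ}
    (hx : 0 ≤ latticeCoord s x) : latticeCoord s (lamOf n s (invSeqOf s x)) ≤ latticeCoord s x :=
  fun i => by
    rw [latticeCoord_lamOf_invSeqOf hs, Int.fract, sub_le_self_iff]
    exact Int.cast_nonneg (Int.floor_nonneg.2 (hx i))

lemma mem_fppZ_iff_asc_invSeqOf (hs : ∀ i, 0 < s i) {x : Fin (n + 1) → ℤ}
    (hx : 0 ≤ latticeCoord s x) :
    x ∈ fppZ n s ↔ (asc n s (invSeqOf s x) : ℤ) = x (Fin.last n) := by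
  refine ⟨asc_invSeqOf hs, fun h => ?_⟩
  have hlam : lamOf n s (invSeqOf s x) = x :=
    eq_of_latticeCoord_le_of_last_eq hs (latticeCoord_lamOf_invSeqOf_le hs hx)
      ((lamOf_last _).trans h)
  rw [← hlam]
  exact lamOf_mem_fppZ hs (isInvSeq_invSeqOf hs x)

/-- The lattice point all of whose coordinates with respect to the generators are one. -/
def unitPoint (s : Fin n → ℤ) : Fin (n + 1) → ℤ := ∑ i, coneGen s i

lemma latticeCoord_unitPoint (hs : ∀ i, 0 < s i) (i : Fin (n + 1)) :
    latticeCoord s (unitPoint s) i = 1 := by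
  simp [unitPoint, latticeCoord_coneGen hs, Pi.single_apply]

lemma unitPoint_sub_mem_lhpConeInteriorZ (hs : ∀ i, 0 < s i) {x : Fin (n + 1) → ℤ}
    (hx : x ∈ fppZ n s) : unitPoint s - x ∈ lhpConeInteriorZ n s :=
  (mem_lhpConeInteriorZ_iff hs).2 fun i => by
    rw [map_sub, Pi.sub_apply, latticeCoord_unitPoint hs, sub_pos]
    exact ((mem_fppZ_iff hs).1 hx i).2

lemma exists_unitPoint_sub_le_of_mem_lhpConeInteriorZ (hs : ∀ i, 0 < s i)
    {p : Fin (n + 1) → ℤ} (hp : p ∈ lhpConeInteriorZ n s) :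
    ∃ x ∈ fppZ n s, latticeCoord s (unitPoint s - x) ≤ latticeCoord s p := by
  refine ⟨lamOf n s (invSeqOf s (-p)), lamOf_mem_fppZ hs (isInvSeq_invSeqOf hs _), fun i => ?_⟩
  have hceil : (1 : ℝ) ≤ ⌈latticeCoord s p i⌉ :=
    Int.cast_one_le_of_pos (Int.ceil_pos.2 ((mem_lhpConeInteriorZ_iff hs).1 hp i))
  rw [map_sub, Pi.sub_apply, latticeCoord_unitPoint hs, latticeCoord_lamOf_invSeqOf hs, map_neg,
    Pi.neg_apply, sub_le_iff_le_add', fract_neg_add_self]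
  exact hceil

lemma mem_iUnion_image_add_lhpConeZ_iff (hs : ∀ i, 0 < s i) {C : Finset (Fin (n + 1) → ℤ)}
    {p : Fin (n + 1) → ℤ} :
    p ∈ ⋃ c ∈ C, (fun x => c + x) '' lhpConeZ n s ↔
      ∃ c ∈ C, latticeCoord s c ≤ latticeCoord s p := by
  have hmem (c : Fin (n + 1) → ℤ) :
      p ∈ (fun x => c + x) '' lhpConeZ n s ↔ latticeCoord s c ≤ latticeCoord s p := by
    rw [Set.image_add_left, Set.mem_preimage, mem_lhpConeZ_iff hs, neg_add_eq_sub, map_sub,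
      sub_nonneg]
  simp only [Set.mem_iUnion, exists_prop, hmem]

lemma forall_exists_le_of_isLevel (hs : ∀ i, 0 < s i) {r : ℤ}
    (hr : IsGreatest ((fun x => x (Fin.last n)) '' fppZ n s) r) (hlevel : IsLevel n s) :
    ∀ x ∈ fppZ n s, ∃ y ∈ fppZ n s, latticeCoord s x ≤ latticeCoord s y ∧ y (Fin.last n) = r := by
  obtain ⟨C, -, hheight, hC⟩ := hlevel
  have hinterior (p : Fin (n + 1) → ℤ) :
      p ∈ lhpConeInteriorZ n s ↔ ∃ c ∈ C, latticeCoord s c ≤ latticeCoord s p := by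
    rw [← hC, mem_iUnion_image_add_lhpConeZ_iff hs]
  have hlift : ∀ x ∈ fppZ n s, ∃ c ∈ C, unitPoint s - c ∈ fppZ n s ∧
      latticeCoord s x ≤ latticeCoord s (unitPoint s - c) := by
    intro x hx
    obtain ⟨c, hcC, hc⟩ := (hinterior _).1 (unitPoint_sub_mem_lhpConeInteriorZ hs hx)
    have hle : latticeCoord s x ≤ latticeCoord s (unitPoint s - c) := by
      rw [map_sub] at hc ⊢
      exact le_sub_comm.1 hc
    have hpos := (mem_lhpConeInteriorZ_iff hs).1 ((hinterior c).2 ⟨c, hcC, le_rfl⟩)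
    refine ⟨c, hcC, (mem_fppZ_iff hs).2 fun i => ⟨?_, ?_⟩, hle⟩
    · exact (latticeCoord_nonneg_of_mem_fppZ hs hx i).trans (hle i)
    · rw [map_sub, Pi.sub_apply, latticeCoord_unitPoint hs]
      exact sub_lt_self _ (hpos i)
  obtain ⟨⟨top, htop, htop_last⟩, hmax⟩ := hr
  obtain ⟨c, hcC, hc, htopc⟩ := hlift top htop
  have hc_last : (unitPoint s - c) (Fin.last n) = r :=
    (hmax ⟨_, hc, rfl⟩).antisymm (htop_last ▸ last_le_last_of_latticeCoord_le htopc)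
  intro x hx
  obtain ⟨d, hdC, hd, hxd⟩ := hlift x hx
  refine ⟨_, hd, hxd, ?_⟩
  rw [← hc_last, Pi.sub_apply, Pi.sub_apply, hheight d hdC c hcC]

lemma isLevel_of_forall_exists_le (hs : ∀ i, 0 < s i) {r : ℤ}
    (h : ∀ x ∈ fppZ n s, ∃ y ∈ fppZ n s,
      latticeCoord s x ≤ latticeCoord s y ∧ y (Fin.last n) = r) :
    IsLevel n s := by
  classical
  have hfin : {y ∈ fppZ n s | y (Fin.last n) = r}.Finite :=
    (finite_fppZ hs).subset (Set.sep_subset _ _)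
  refine ⟨hfin.toFinset.image fun y => unitPoint s - y, ?_, ?_, ?_⟩
  · obtain ⟨y, hy, -, hlast⟩ := h 0 ((mem_fppZ_iff hs).2 fun i => by simp)
    exact ⟨_, Finset.mem_image_of_mem _ (hfin.mem_toFinset.2 ⟨hy, hlast⟩)⟩
  · simp only [Finset.forall_mem_image, hfin.mem_toFinset, Set.mem_sep_iff]
    rintro y ⟨-, hy⟩ z ⟨-, hz⟩
    rw [Pi.sub_apply, Pi.sub_apply, hy, hz]
  · ext p
    simp only [mem_iUnion_image_add_lhpConeZ_iff hs, Finset.exists_mem_image, hfin.mem_toFinset,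
      Set.mem_sep_iff]
    constructor
    · rintro ⟨y, ⟨hy, -⟩, hyp⟩
      have hpos := (mem_lhpConeInteriorZ_iff hs).1 (unitPoint_sub_mem_lhpConeInteriorZ hs hy)
      exact (mem_lhpConeInteriorZ_iff hs).2 fun i => (hpos i).trans_le (hyp i)
    · intro hp
      obtain ⟨x, hx, hxp⟩ := exists_unitPoint_sub_le_of_mem_lhpConeInteriorZ hs hp
      obtain ⟨y, hy, hxy, hlast⟩ := h x hx
      refine ⟨y, ⟨hy, hlast⟩, le_trans ?_ hxp⟩
      rw [map_sub, map_sub]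
      exact sub_le_sub_left hxy _

/-- The points `unitPoint s - y`, for `y` in the fundamental parallelepiped, generate the interior
of the cone, and those of least height are the ones with `y` of greatest height `r`. -/
lemma isLevel_iff_forall_exists_le (hs : ∀ i, 0 < s i) {r : ℤ}
    (hr : IsGreatest ((fun x => x (Fin.last n)) '' fppZ n s) r) :
    IsLevel n s ↔ ∀ x ∈ fppZ n s, ∃ y ∈ fppZ n s,
      latticeCoord s x ≤ latticeCoord s y ∧ y (Fin.last n) = r :=
  ⟨forall_exists_le_of_isLevel hs hr, isLevel_of_forall_exists_le hs⟩

lemma exists_add_mem_fppZ_of_le (hs : ∀ i, 0 < s i) {x y : Fin (n + 1) → ℤ} (hx : x ∈ fppZ n s)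
    (hy : y ∈ fppZ n s) (hxy : latticeCoord s x ≤ latticeCoord s y)
    (hlast : x (Fin.last n) < y (Fin.last n)) :
    ∃ u ∈ fppZ n s, u (Fin.last n) = 1 ∧ x + u ∈ fppZ n s := by
  have hx0 := latticeCoord_nonneg_of_mem_fppZ hs hx
  obtain ⟨u, hu, hu0, huv⟩ := exists_latticeCoord_mem_Icc_of_one_le_last hs (v := y - x)
    (by rw [map_sub]; exact sub_nonneg.2 hxy) (by rw [Pi.sub_apply]; omega)
  rw [map_sub] at huv
  refine ⟨u, mem_fppZ_of_latticeCoord_le hs hu0 (huv.trans (sub_le_self _ hx0)) hy, hu,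
    mem_fppZ_of_latticeCoord_le hs (y := y) ?_ ?_ hy⟩ <;> rw [map_add]
  · exact add_nonneg hx0 hu0
  · exact le_sub_iff_add_le'.1 huv

lemma exists_le_of_forall_exists_add_mem_fppZ (hs : ∀ i, 0 < s i) {r : ℤ}
    (hr : IsGreatest ((fun x => x (Fin.last n)) '' fppZ n s) r)
    (h : ∀ x ∈ fppZ n s, 1 ≤ x (Fin.last n) → x (Fin.last n) < r →
      ∃ u ∈ fppZ n s, u (Fin.last n) = 1 ∧ x + u ∈ fppZ n s)
    {x : Fin (n + 1) → ℤ} (hx : x ∈ fppZ n s) :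
    ∃ y ∈ fppZ n s, latticeCoord s x ≤ latticeCoord s y ∧ y (Fin.last n) = r := by
  obtain ⟨⟨top, htop, htop_last⟩, hmax⟩ := hr
  have hx0 := latticeCoord_nonneg_of_mem_fppZ hs hx
  have hxlast : 0 ≤ x (Fin.last n) :=
    last_le_last_of_latticeCoord_le (x := 0) (by rwa [map_zero])
  rcases hxlast.eq_or_lt with hzero | hpos
  · obtain rfl : 0 = x := eq_of_latticeCoord_le_of_last_eq hs (by rwa [map_zero]) hzero
    refine ⟨top, htop, ?_, htop_last⟩
    rw [map_zero]
    exact latticeCoord_nonneg_of_mem_fppZ hs htop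
  · -- A point of greatest height above `x` has height `r`, since otherwise it could be raised.
    obtain ⟨y, ⟨hy, hxy⟩, hymax⟩ := Set.Finite.exists_maximalFor (fun y => y (Fin.last n))
      {y ∈ fppZ n s | latticeCoord s x ≤ latticeCoord s y}
      ((finite_fppZ hs).subset (Set.sep_subset _ _)) ⟨x, hx, le_rfl⟩
    refine ⟨y, hy, hxy, (hmax ⟨y, hy, rfl⟩).eq_of_not_lt fun hlt => ?_⟩
    have hylast := last_le_last_of_latticeCoord_le hxy
    obtain ⟨u, hu, hu_last, hyu⟩ := h y hy (by omega) hlt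
    have hle : latticeCoord s y ≤ latticeCoord s (y + u) := by
      rw [map_add]
      exact le_add_of_nonneg_right (latticeCoord_nonneg_of_mem_fppZ hs hu)
    have hback : (y + u) (Fin.last n) ≤ y (Fin.last n) :=
      hymax ⟨hyu, hxy.trans hle⟩ (last_le_last_of_latticeCoord_le hle)
    rw [Pi.add_apply] at hback
    omega

lemma isLevel_iff_forall_exists_add_mem_fppZ (hs : ∀ i, 0 < s i) {r : ℤ}
    (hr : IsGreatest ((fun x => x (Fin.last n)) '' fppZ n s) r) :
    IsLevel n s ↔ ∀ x ∈ fppZ n s, 1 ≤ x (Fin.last n) → x (Fin.last n) < r →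
      ∃ u ∈ fppZ n s, u (Fin.last n) = 1 ∧ x + u ∈ fppZ n s := by
  rw [isLevel_iff_forall_exists_le hs hr]
  refine ⟨fun h x hx _ hlt => ?_, fun h x hx => exists_le_of_forall_exists_add_mem_fppZ hs hr h hx⟩
  obtain ⟨y, hy, hxy, rfl⟩ := h x hx
  exact exists_add_mem_fppZ_of_le hs hx hy hxy hlt

lemma lamOf_add_lamOf_mem_fppZ_iff (hs : ∀ i, 0 < s i) {e e' : Fin n → ℤ} (he : IsInvSeq n s e)
    (he' : IsInvSeq n s e') :
    lamOf n s e + lamOf n s e' ∈ fppZ n s ↔ asc n s (invAdd n s e e') = asc n s e + asc n s e' := by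
  have hnonneg : 0 ≤ latticeCoord s (lamOf n s e + lamOf n s e') := by
    rw [map_add]
    exact add_nonneg (latticeCoord_nonneg_of_mem_fppZ hs (lamOf_mem_fppZ hs he))
      (latticeCoord_nonneg_of_mem_fppZ hs (lamOf_mem_fppZ hs he'))
  rw [mem_fppZ_iff_asc_invSeqOf hs hnonneg, invSeqOf_add, invSeqOf_lamOf he, invSeqOf_lamOf he',
    Pi.add_apply, lamOf_last, lamOf_last]
  norm_cast

lemma exists_lamOf_add_mem_fppZ_iff (hs : ∀ i, 0 < s i) {e : Fin n → ℤ} (he : IsInvSeq n s e) :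
    (∃ u ∈ fppZ n s, u (Fin.last n) = 1 ∧ lamOf n s e + u ∈ fppZ n s) ↔
      ∃ e', IsInvSeq n s e' ∧ asc n s e' = 1 ∧
        IsInvSeq n s (invAdd n s e e') ∧ asc n s (invAdd n s e e') = asc n s e + 1 := by
  rw [fppZ_eq_image_lamOf hs, Set.exists_mem_image, ← fppZ_eq_image_lamOf hs]
  refine exists_congr fun e' => and_congr_right fun he' => ?_
  rw [lamOf_last, Nat.cast_eq_one, lamOf_add_lamOf_mem_fppZ_iff hs he he']
  refine and_congr_right fun hasc => ?_
  have hadd : IsInvSeq n s (invAdd n s e e') := isInvSeq_emod hs _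
  rw [hasc, and_iff_right hadd]

end LectureHall

theorem lhp_level_iff (n : ℕ) (s : Fin n → ℤ) (hs : ∀ i, 0 < s i) (r : ℕ)
    (hr : IsGreatest {k : ℕ | ∃ e : Fin n → ℤ, IsInvSeq n s e ∧ asc n s e = k} r) :
    IsLevel n s ↔
      (∀ k : ℕ, 1 ≤ k → k < r →
        ∀ e : Fin n → ℤ, IsInvSeq n s e → asc n s e = k →
          ∃ e' : Fin n → ℤ, IsInvSeq n s e' ∧ asc n s e' = 1 ∧
            IsInvSeq n s (invAdd n s e e') ∧ asc n s (invAdd n s e e') = k + 1) := by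
  have hmax := LectureHall.isGreatest_last_fppZ hs hr
  rw [LectureHall.isLevel_iff_forall_exists_add_mem_fppZ hs hmax,
    LectureHall.fppZ_eq_image_lamOf hs, Set.forall_mem_image, ← LectureHall.fppZ_eq_image_lamOf hs]
  simp only [LectureHall.lamOf_last, Nat.one_le_cast, Nat.cast_lt]
  constructor
  · rintro h _ hpos hlt e he rfl
    exact (LectureHall.exists_lamOf_add_mem_fppZ_iff hs he).1 (h he hpos hlt)
  · intro h e he hpos hlt
    exact (LectureHall.exists_lamOf_add_mem_fppZ_iff hs he).2 (h _ hpos hlt e he rfl)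
end

section
/- Let s = (s_1,…,s_n) be a sequence of positive integers satisfying gcd(s_{i−1}, s_i) = 1 for some 1 < i ≤ n. The s-Eulerian polynomial Σ_{e ∈ I_n^(s)} z^{asc(e)} is palindromic if and only if there exist c, d ∈ ℤ^n with c_1 = d_1 = 1 satisfying c_j·s_{j−1} = c_{j−1}·s_j + gcd(s_{j−1}, s_j) and d_j·(←s)_{j−1} = d_{j−1}·(←s)_j + gcd((←s)_{j−1}, (←s)_j) for all 2 ≤ j ≤ n. -/
open scoped BigOperators

/-!
Pad `s` and an inversion sequence `e` by `s_0 = s_{n+1} = 1` and `e_0 = e_{n+1} = 0`. Each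
fractional part `{e_j/s_j - e_{j+1}/s_{j+1}}` is the difference itself, plus `1` at an ascent, so
telescoping gives `asc e = ∑_j {e_j/s_j - e_{j+1}/s_{j+1}}`. Hence `asc` is a subadditive function
on the finite group `∏ ℤ/s_i`. If the distribution of a subadditive `f` on a finite group is
symmetric on `{0, …, r}`, then comparing averages in `f c ≤ f (c - x) + f x`, where `f c = r`,
forces equality for every `x`.

For `asc` this equality splits over `j` and says that each summand of `c` takes its largest
possible value `1 - gcd(s_j, s_{j+1})/(s_j s_{j+1})`, i.e. `c_{j+1} s_j ≡ c_j s_{j+1} + gcd(s_j,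
s_{j+1})` modulo `s_j s_{j+1}`. Adding multiples of `s_j` to `c_j` turns these congruences into
equations for `j = 0, …, n`. Read from the left they are the recursion for `c`, read from the
right the one for `d`; conversely two such solutions satisfy `c_i + d_{n+1-i} = l s_i` for one
rational `l`, and a coprime pair of neighbours makes `l` an integer, so that `c` extends to index
`n + 1` by `l`.
-/

namespace SEulerian

section FractDrop

/-- The fractional part of the drop from `a / s` to `b / t`, which is what a pair of consecutive
entries contributes to the number of ascents. -/
def fractDrop (s t a b : ℤ) : ℚ := Int.fract ((a : ℚ) / s - (b : ℚ) / t)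

/-- The largest value of `fractDrop s t` for positive `s` and `t`. -/
def maxFractDrop (s t : ℤ) : ℚ := 1 - ((Int.gcd s t : ℤ) : ℚ) / (s * t : ℤ)

theorem fractDrop_nonneg (s t a b : ℤ) : 0 ≤ fractDrop s t a b :=
  Int.fract_nonneg _

theorem div_sub_div_eq_sub_add (s t a b a' b' : ℤ) :
    (a : ℚ) / s - b / t =
      (((a - a' : ℤ) : ℚ) / s - ((b - b' : ℤ) : ℚ) / t) + ((a' : ℚ) / s - b' / t) := by
  push_cast
  ring

theorem fractDrop_le_sub_add (s t a b a' b' : ℤ) :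
    fractDrop s t a b ≤ fractDrop s t (a - a') (b - b') + fractDrop s t a' b' := by
  unfold fractDrop
  rw [div_sub_div_eq_sub_add s t a b a' b']
  exact Int.fract_add_le _ _

theorem gcd_dvd_cross_sub (s t a b : ℤ) : (Int.gcd s t : ℤ) ∣ a * t - s * b :=
  dvd_sub ((Int.gcd_dvd_right ..).mul_left a) ((Int.gcd_dvd_left ..).mul_right b)

variable {s t : ℤ}

theorem fractDrop_congr (hs : s ≠ 0) (ht : t ≠ 0) {a b a' b' : ℤ} (ha : a ≡ a' [ZMOD s])
    (hb : b ≡ b' [ZMOD t]) : fractDrop s t a b = fractDrop s t a' b' := by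
  obtain ⟨u, hu⟩ := ha.symm.dvd
  obtain ⟨v, hv⟩ := hb.symm.dvd
  obtain rfl : a = a' + s * u := by linarith
  obtain rfl : b = b' + t * v := by linarith
  refine Int.fract_eq_fract.2 ⟨u - v, ?_⟩
  push_cast
  field_simp
  ring

theorem fractDrop_eq_emod_div (hs : 0 < s) (ht : 0 < t) (a b : ℤ) :
    fractDrop s t a b = (((a * t - s * b) % (s * t) : ℤ) : ℚ) / (s * t : ℤ) := by
  have hst : 0 < s * t := mul_pos hs ht
  have h_diff : (a : ℚ) / s - b / t = ((a * t - s * b : ℤ) : ℚ) / (s * t : ℤ) := by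
    push_cast
    exact div_sub_div _ _ (by exact_mod_cast hs.ne') (by exact_mod_cast ht.ne')
  unfold fractDrop
  rw [h_diff]
  lift s * t to ℕ using hst.le with N
  exact Int.fract_div_intCast_eq_div_intCast_mod

theorem fractDrop_le_maxFractDrop (hs : 0 < s) (ht : 0 < t) (a b : ℤ) :
    fractDrop s t a b ≤ maxFractDrop s t := by
  have hst : 0 < s * t := mul_pos hs ht
  have h_dvd : (Int.gcd s t : ℤ) ∣ s * t - (a * t - s * b) % (s * t) :=
    have h_gcd : (Int.gcd s t : ℤ) ∣ s * t := (Int.gcd_dvd_left ..).mul_right t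
    dvd_sub h_gcd ((EuclideanDomain.dvd_mod_iff h_gcd).2 (gcd_dvd_cross_sub s t a b))
  have h_le := Int.le_of_dvd (sub_pos.2 (Int.emod_lt_of_pos _ hst)) h_dvd
  have hstq : (0 : ℚ) < (s * t : ℤ) := by exact_mod_cast hst
  rw [fractDrop_eq_emod_div hs ht, maxFractDrop, one_sub_div hstq.ne']
  gcongr
  exact_mod_cast le_sub_comm.1 h_le

theorem fractDrop_eq_maxFractDrop_iff (hs : 0 < s) (ht : 0 < t) {a b : ℤ} :
    fractDrop s t a b = maxFractDrop s t ↔ b * s ≡ a * t + Int.gcd s t [ZMOD s * t] := by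
  have hst : 0 < s * t := mul_pos hs ht
  have hstq : ((s * t : ℤ) : ℚ) ≠ 0 := by exact_mod_cast hst.ne'
  have h_gcd_pos : 0 < (Int.gcd s t : ℤ) := by exact_mod_cast Int.gcd_pos_of_ne_zero_left t hs.ne'
  have h_gcd_le : (Int.gcd s t : ℤ) ≤ s * t := Int.le_of_dvd hst ((Int.gcd_dvd_left ..).mul_right t)
  have h_mod : (s * t - Int.gcd s t) % (s * t) = s * t - Int.gcd s t :=
    Int.emod_eq_of_lt (sub_nonneg.2 h_gcd_le) (sub_lt_self _ h_gcd_pos)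
  calc fractDrop s t a b = maxFractDrop s t
      ↔ (a * t - s * b) % (s * t) = s * t - Int.gcd s t := by
        rw [fractDrop_eq_emod_div hs ht, maxFractDrop, one_sub_div hstq, div_left_inj' hstq]
        exact_mod_cast Iff.rfl
    _ ↔ a * t - s * b ≡ s * t - Int.gcd s t [ZMOD s * t] := by rw [Int.ModEq, h_mod]
    _ ↔ b * s ≡ a * t + Int.gcd s t [ZMOD s * t] := by
        rw [Int.modEq_iff_dvd, Int.modEq_iff_dvd, ← dvd_sub_self_left]
        ring_nf

theorem exists_fractDrop_eq_maxFractDrop (hs : 0 < s) (ht : 0 < t) :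
    ∃ a b, fractDrop s t a b = maxFractDrop s t := by
  refine ⟨-Int.gcdB s t, Int.gcdA s t, (fractDrop_eq_maxFractDrop_iff hs ht).2 ?_⟩
  rw [Int.gcd_eq_gcd_ab]
  ring_nf
  rfl

theorem fractDrop_sub_add_of_eq_maxFractDrop (hs : 0 < s) (ht : 0 < t) {c d : ℤ}
    (h : fractDrop s t c d = maxFractDrop s t) (a b : ℤ) :
    fractDrop s t (c - a) (d - b) + fractDrop s t a b = fractDrop s t c d := by
  obtain ⟨z, hz⟩ : ∃ z : ℤ, fractDrop s t c d - fractDrop s t (c - a) (d - b) - fractDrop s t a b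
      = z := by
    unfold fractDrop
    rw [div_sub_div_eq_sub_add s t c d a b]
    exact Int.fract_add _ _
  have h_lt_one : fractDrop s t c d < 1 := Int.fract_lt_one _
  have h_sub_le := fractDrop_le_maxFractDrop hs ht (c - a) (d - b)
  have h_le := fractDrop_le_maxFractDrop hs ht a b
  have h_sub_add := fractDrop_le_sub_add s t c d a b
  have hz_le : z ≤ 0 := by
    have : (z : ℚ) ≤ 0 := by linarith
    exact_mod_cast this
  have hz_gt : -1 < z := by
    have : (-1 : ℚ) < z := by linarith
    exact_mod_cast this
  obtain rfl : z = 0 := by omega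
  push_cast at hz
  linarith

end FractDrop

section Height

/-- The number of ascents of `F` relative to `S`, as a sum of fractional parts; it makes sense for
every integer sequence `F` and depends only on the residues of `F j` modulo `S j`. -/
def height (N : ℕ) (S F : ℕ → ℤ) : ℚ :=
  ∑ j ∈ Finset.range N, fractDrop (S j) (S (j + 1)) (F j) (F (j + 1))

theorem height_le_sub_add (N : ℕ) (S C F : ℕ → ℤ) :
    height N S C ≤ height N S (C - F) + height N S F := by
  unfold height
  rw [← Finset.sum_add_distrib]
  exact Finset.sum_le_sum fun j _ => fractDrop_le_sub_add ..

theorem height_congr {N : ℕ} {S F G : ℕ → ℤ} (hS : ∀ j, S j ≠ 0) (h : ∀ j, F j ≡ G j [ZMOD S j]) :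
    height N S F = height N S G :=
  Finset.sum_congr rfl fun j _ => fractDrop_congr (hS j) (hS (j + 1)) (h j) (h (j + 1))

theorem height_sub_add_eq_iff (N : ℕ) {S : ℕ → ℤ} (hS : ∀ j, 0 < S j) (C : ℕ → ℤ) :
    (∀ F, height N S (C - F) + height N S F = height N S C) ↔
      ∀ j < N, fractDrop (S j) (S (j + 1)) (C j) (C (j + 1)) = maxFractDrop (S j) (S (j + 1)) := by
  constructor
  · intro h j hj
    obtain ⟨a, b, h_max⟩ := exists_fractDrop_eq_maxFractDrop (hS j) (hS (j + 1))
    let F : ℕ → ℤ := fun i => if i = j then a else b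
    have h_sum := h F
    simp only [height, ← Finset.sum_add_distrib] at h_sum
    have h_term := (Finset.sum_eq_sum_iff_of_le fun i _ => fractDrop_le_sub_add ..).1 h_sum.symm
      j (Finset.mem_range.2 hj)
    refine (fractDrop_le_maxFractDrop (hS j) (hS (j + 1)) _ _).antisymm ?_
    have hF : fractDrop (S j) (S (j + 1)) (F j) (F (j + 1)) = maxFractDrop (S j) (S (j + 1)) := by
      simpa [F] using h_max
    rw [h_term, hF]
    exact le_add_of_nonneg_left (fractDrop_nonneg ..)
  · intro h F
    unfold height
    rw [← Finset.sum_add_distrib]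
    exact Finset.sum_congr rfl fun j hj => fractDrop_sub_add_of_eq_maxFractDrop
      (hS j) (hS (j + 1)) (h j (Finset.mem_range.1 hj)) (F j) (F (j + 1))

end Height

section GcdChain

/-- `C` solves the equations `C_{j+1} S_j = C_j S_{j+1} + gcd(S_j, S_{j+1})` for `0 ≤ j < N`, the
common form of the recursions for `c` (from the left) and `d` (from the right). -/
def IsGcdChain (N : ℕ) (S C : ℕ → ℤ) : Prop :=
  ∀ j < N, C (j + 1) * S j = C j * S (j + 1) + Int.gcd (S j) (S (j + 1))

theorem exists_isGcdChain_iff_exists_modEq (N : ℕ) (S : ℕ → ℤ) :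
    (∃ C, IsGcdChain N S C) ↔ ∃ C : ℕ → ℤ, ∀ j < N,
      C (j + 1) * S j ≡ C j * S (j + 1) + Int.gcd (S j) (S (j + 1)) [ZMOD S j * S (j + 1)] := by
  refine ⟨fun ⟨C, hC⟩ => ⟨C, fun j hj => congrArg (· % _) (hC j hj)⟩, fun ⟨C, hC⟩ => ?_⟩
  choose! u hu using fun j hj => (hC j hj).dvd
  refine ⟨fun j => C j + S j * ∑ i ∈ Finset.range j, u i, fun j hj => ?_⟩
  simp only [Finset.sum_range_succ]
  linear_combination -hu j hj

theorem exists_isGcdChain_iff_exists_height_sub_add_eq (N : ℕ) {S : ℕ → ℤ} (hS : ∀ j, 0 < S j) :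
    (∃ C, IsGcdChain N S C) ↔ ∃ C, ∀ F, height N S (C - F) + height N S F = height N S C := by
  rw [exists_isGcdChain_iff_exists_modEq]
  simp only [height_sub_add_eq_iff N hS, fractDrop_eq_maxFractDrop_iff (hS _) (hS _)]

end GcdChain

section Subadditive

open Finset

theorem two_mul_sum_eq_card_mul {α : Type*} [Fintype α] {f : α → ℕ} {r : ℕ} (h_le : ∀ x, f x ≤ r)
    (h_symm : ∀ k ≤ r, #{x | f x = k} = #{x | f x = r - k}) :
    2 * ∑ x, f x = Fintype.card α * r := by
  have sum_comp (g : ℕ → ℕ) : ∑ x, g (f x) = ∑ k ∈ range (r + 1), #{x | f x = k} * g k := by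
    rw [← sum_fiberwise_of_maps_to' (t := range (r + 1))
      (fun x _ => mem_range.2 (Nat.lt_succ_of_le (h_le x)))]
    simp
  have h_reflect : ∑ x, (r - f x) = ∑ x, f x :=
    calc ∑ x, (r - f x) = ∑ k ∈ range (r + 1), #{x | f x = k} * (r - k) := sum_comp (r - ·)
      _ = ∑ k ∈ range (r + 1), #{x | f x = r - k} * (r - k) :=
        sum_congr rfl fun k hk => by rw [h_symm k (Nat.lt_succ_iff.1 (mem_range.1 hk))]
      _ = ∑ k ∈ range (r + 1), #{x | f x = k} * k := sum_flip fun k => #{x | f x = k} * k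
      _ = ∑ x, f x := (sum_comp id).symm
  calc 2 * ∑ x, f x = ∑ x, (f x + (r - f x)) := by rw [sum_add_distrib, h_reflect, two_mul]
    _ = Fintype.card α * r := by simp [Nat.add_sub_cancel' (h_le _)]

variable {G : Type*} [AddGroup G] [Fintype G] {f : G → ℕ}

theorem exists_sub_add_eq_of_isPalindromic (hf : ∀ x y, f x ≤ f (x - y) + f y)
    (h : IsPalindromic fun k => #{x | f x = k}) : ∃ c, ∀ x, f (c - x) + f x = f c := by
  obtain ⟨r, hr, h_top, h_symm⟩ := h
  obtain ⟨c, hc⟩ := card_ne_zero.1 hr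
  obtain rfl : f c = r := (mem_filter.1 hc).2
  have h_le (x : G) : f x ≤ f c := by
    by_contra! h_lt
    exact filter_eq_empty_iff.1 (card_eq_zero.1 (h_top _ h_lt)) (mem_univ x) rfl
  have h_sum : ∑ _x : G, f c = ∑ x, (f (c - x) + f x) :=
    calc ∑ _x : G, f c = 2 * ∑ x, f x := by simp [two_mul_sum_eq_card_mul h_le h_symm]
      _ = ∑ x, f (c - x) + ∑ x, f x := by
        rw [two_mul, ← Equiv.sum_comp (Equiv.subLeft c) f]
        rfl
      _ = ∑ x, (f (c - x) + f x) := sum_add_distrib.symm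
  exact ⟨c, fun x => ((sum_eq_sum_iff_of_le fun y _ => hf c y).1 h_sum x (mem_univ x)).symm⟩

theorem isPalindromic_of_sub_add_eq {c : G} (h : ∀ x, f (c - x) + f x = f c) :
    IsPalindromic fun k => #{x | f x = k} := by
  refine ⟨f c, card_ne_zero.2 ⟨c, by simp⟩, fun k hk => ?_, fun k hk => ?_⟩
  · exact card_eq_zero.2 (filter_eq_empty_iff.2 fun x _ hx => by have := h x; omega)
  · refine card_equiv (Equiv.subLeft c) fun x => ?_
    have := h x
    simp only [mem_filter, mem_univ, true_and, Equiv.subLeft_apply]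
    omega

end Subadditive

section Pad

variable {n : ℕ} (a b : ℤ) (f : Fin n → ℤ)

/-- The finite sequence `f` shifted to the indices `1, …, n`, preceded by `a` and followed by `b`
forever. In the 1-based notation of the paper, `pad 1 1 s` is `s` with `s_0 = s_{n+1} = 1`. -/
def pad : ℕ → ℤ
  | 0 => a
  | j + 1 => if h : j < n then f ⟨j, h⟩ else b

@[simp]
theorem pad_zero : pad a b f 0 = a :=
  rfl

@[simp]
theorem pad_succ (i : Fin n) : pad a b f (i + 1) = f i :=
  dif_pos i.isLt

theorem pad_of_length_lt {j : ℕ} (hj : n < j) : pad a b f j = b := by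
  obtain _ | j := j
  · omega
  · exact dif_neg (by omega)

@[simp]
theorem pad_length_add_one : pad a b f (n + 1) = b :=
  pad_of_length_lt a b f n.lt_succ_self

theorem pad_one_one_pos {s : Fin n → ℤ} (hs : ∀ i, 0 < s i) (j : ℕ) : 0 < pad 1 1 s j := by
  unfold pad
  split
  · exact one_pos
  · split_ifs
    exacts [hs _, one_pos]

end Pad

section Ascents

variable {n : ℕ} {s e : Fin n → ℤ}

theorem pad_div_pad_mem_Ico (he : IsInvSeq n s e) (j : ℕ) :
    (pad 0 0 e j : ℚ) / pad 1 1 s j ∈ Set.Ico 0 1 := by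
  unfold pad
  split
  · simp
  · split_ifs with h
    · obtain ⟨h_nonneg, h_lt⟩ := he ⟨_, h⟩
      have h_nonneg_rat : (0 : ℚ) ≤ e ⟨_, h⟩ := by exact_mod_cast h_nonneg
      have h_lt_rat : (e ⟨_, h⟩ : ℚ) < s ⟨_, h⟩ := by exact_mod_cast h_lt
      have h_pos := h_nonneg_rat.trans_lt h_lt_rat
      exact ⟨div_nonneg h_nonneg_rat h_pos.le, (div_lt_one h_pos).2 h_lt_rat⟩
    · simp

theorem invRatio_eq_pad_div_pad (i : Fin n) :
    invRatio n s e i = (pad 0 0 e (i + 1) : ℚ) / pad 1 1 s (i + 1) := by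
  simp [invRatio]

theorem prevRatio_eq_pad_div_pad (i : Fin n) :
    prevRatio n s e i = (pad 0 0 e i : ℚ) / pad 1 1 s i := by
  obtain ⟨_ | j, hj⟩ := i
  · simp [prevRatio]
  · exact invRatio_eq_pad_div_pad ⟨j, by omega⟩

theorem fract_sub_eq_sub_add_ite {x y : ℚ} (hx : x ∈ Set.Ico 0 1) (hy : y ∈ Set.Ico 0 1) :
    Int.fract (x - y) = x - y + if x < y then 1 else 0 := by
  obtain ⟨hx_nonneg, hx_lt⟩ := hx
  obtain ⟨hy_nonneg, hy_lt⟩ := hy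
  split_ifs with h
  · rw [← Int.fract_add_one, Int.fract_eq_self]
    constructor <;> linarith
  · rw [add_zero, Int.fract_eq_self]
    constructor <;> linarith

theorem asc_eq_height (he : IsInvSeq n s e) :
    (asc n s e : ℚ) = height (n + 1) (pad 1 1 s) (pad 0 0 e) := by
  let ρ (j : ℕ) : ℚ := (pad 0 0 e j : ℚ) / pad 1 1 s j
  have hρ (j : ℕ) : ρ j ∈ Set.Ico 0 1 := pad_div_pad_mem_Ico he j
  have hρ_zero : ρ 0 = 0 := by simp [ρ]
  have hρ_last : ρ (n + 1) = 0 := by simp [ρ]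
  have h_no_ascent : ¬ρ n < ρ (n + 1) := by simpa [hρ_last] using (hρ n).1
  symm
  calc height (n + 1) (pad 1 1 s) (pad 0 0 e)
      = ∑ j ∈ Finset.range (n + 1), (ρ j - ρ (j + 1) + if ρ j < ρ (j + 1) then 1 else 0) :=
        Finset.sum_congr rfl fun j _ => fract_sub_eq_sub_add_ite (hρ j) (hρ (j + 1))
    _ = ∑ j ∈ Finset.range (n + 1), if ρ j < ρ (j + 1) then 1 else 0 := by
        rw [Finset.sum_add_distrib, Finset.sum_range_sub', hρ_zero, hρ_last, sub_zero, zero_add]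
    _ = ∑ i : Fin n, if ρ i < ρ (i + 1) then 1 else 0 := by
        rw [Finset.sum_range_succ, if_neg h_no_ascent, add_zero, Finset.sum_range]
    _ = asc n s e := by
        simp only [asc, ascSet, prevRatio_eq_pad_div_pad, invRatio_eq_pad_div_pad, ρ,
          Finset.sum_boole]

end Ascents

section Residues

variable {n : ℕ} (s : Fin n → ℤ)

/-- The group `∏ ℤ/s_i` of which the `s`-inversion sequences are the standard representatives. -/
abbrev Residues : Type := ∀ i, ZMod (s i).natAbs

/-- Reduction of the entries `F 1, …, F n` of an integer sequence modulo `s`. -/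
def residue : (ℕ → ℤ) →+ Residues s where
  toFun F i := (F (i + 1) : ZMod (s i).natAbs)
  map_zero' := by ext; simp
  map_add' F G := by ext; simp

/-- The standard representative of a residue, an inversion sequence for positive `s`. -/
def rep (x : Residues s) : Fin n → ℤ := fun i => (x i).cast

theorem residue_pad_rep (a b : ℤ) (x : Residues s) : residue s (pad a b (rep s x)) = x := by
  ext i
  simp [residue, rep]

theorem rep_residue_apply (F : ℕ → ℤ) (i : Fin n) : rep s (residue s F) i = F (i + 1) % s i := by
  simp [rep, residue, ZMod.coe_intCast]

theorem pad_rep_residue_modEq (F : ℕ → ℤ) (j : ℕ) :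
    pad 0 0 (rep s (residue s F)) j ≡ F j [ZMOD pad 1 1 s j] := by
  obtain _ | j := j
  · exact Int.modEq_one
  · by_cases h : j < n
    · have h_entry : pad 0 0 (rep s (residue s F)) (j + 1) = F (j + 1) % s ⟨j, h⟩ :=
        (pad_succ 0 0 _ ⟨j, h⟩).trans (rep_residue_apply s F ⟨j, h⟩)
      rw [h_entry, pad_succ 1 1 s ⟨j, h⟩]
      exact Int.mod_modEq _ _
    · rw [pad_of_length_lt 1 1 s (by omega)]
      exact Int.modEq_one

variable {s}

theorem rep_residue_pad (a b : ℤ) {e : Fin n → ℤ} (he : IsInvSeq n s e) :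
    rep s (residue s (pad a b e)) = e := by
  ext i
  rw [rep_residue_apply, pad_succ]
  exact Int.emod_eq_of_lt (he i).1 (he i).2

theorem isInvSeq_rep (hs : ∀ i, 0 < s i) (x : Residues s) : IsInvSeq n s (rep s x) := fun i => by
  rw [← residue_pad_rep s 0 0 x, rep_residue_apply]
  exact ⟨Int.emod_nonneg _ (hs i).ne', Int.emod_lt_of_pos _ (hs i)⟩

theorem asc_rep_residue (hs : ∀ i, 0 < s i) (F : ℕ → ℤ) :
    (asc n s (rep s (residue s F)) : ℚ) = height (n + 1) (pad 1 1 s) F := by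
  rw [asc_eq_height (isInvSeq_rep hs _)]
  exact height_congr (fun j => (pad_one_one_pos hs j).ne') (pad_rep_residue_modEq s F)

theorem asc_rep_le_sub_add (hs : ∀ i, 0 < s i) (x y : Residues s) :
    asc n s (rep s x) ≤ asc n s (rep s (x - y)) + asc n s (rep s y) := by
  rw [← residue_pad_rep s 0 0 x, ← residue_pad_rep s 0 0 y, ← map_sub, ← Nat.cast_le (α := ℚ)]
  push_cast
  simp only [asc_rep_residue hs]
  exact height_le_sub_add ..

theorem exists_asc_rep_sub_add_eq_iff (hs : ∀ i, 0 < s i) :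
    (∃ c, ∀ x, asc n s (rep s (c - x)) + asc n s (rep s x) = asc n s (rep s c)) ↔
      ∃ C, ∀ F, height (n + 1) (pad 1 1 s) (C - F) + height (n + 1) (pad 1 1 s) F =
        height (n + 1) (pad 1 1 s) C := by
  have h_surj : Function.Surjective (residue s) := fun x => ⟨_, residue_pad_rep s 0 0 x⟩
  simp only [h_surj.exists, h_surj.forall, ← map_sub, ← Nat.cast_inj (R := ℚ), Nat.cast_add,
    asc_rep_residue hs]

/-- The inversion sequences as a complete system of residues modulo `s`. -/
def invSeqEquiv (hs : ∀ i, 0 < s i) : {e // IsInvSeq n s e} ≃ Residues s where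
  toFun e := residue s (pad 0 0 e.1)
  invFun x := ⟨rep s x, isInvSeq_rep hs x⟩
  left_inv e := Subtype.ext (rep_residue_pad 0 0 e.2)
  right_inv := residue_pad_rep s 0 0

theorem hStar_eq_card_residues (hs : ∀ i, 0 < s i) (k : ℕ) :
    hStar n s k = Nat.card {x : Residues s // asc n s (rep s x) = k} :=
  Nat.card_congr <| (Equiv.subtypeSubtypeEquivSubtypeInter _ _).symm.trans <|
    ((invSeqEquiv hs).symm.subtypeEquiv fun _ => Iff.rfl).symm

theorem isPalindromic_hStar_iff_exists_isGcdChain (hs : ∀ i, 0 < s i) :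
    IsPalindromic (hStar n s) ↔ ∃ C, IsGcdChain (n + 1) (pad 1 1 s) C := by
  have (i : Fin n) : NeZero (s i).natAbs := ⟨Int.natAbs_ne_zero.2 (hs i).ne'⟩
  have h_hStar : hStar n s = fun k => Finset.card {x : Residues s | asc n s (rep s x) = k} := by
    ext k
    rw [hStar_eq_card_residues hs, Nat.card_eq_fintype_card, Fintype.card_subtype]
  rw [exists_isGcdChain_iff_exists_height_sub_add_eq _ (pad_one_one_pos hs),
    ← exists_asc_rep_sub_add_eq_iff hs, h_hStar]
  exact ⟨exists_sub_add_eq_of_isPalindromic (asc_rep_le_sub_add hs),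
    fun ⟨_, hc⟩ => isPalindromic_of_sub_add_eq hc⟩

end Residues

section Recursions

variable {n : ℕ} {s : Fin n → ℤ}

theorem IsGcdChain.pad_equations {C : ℕ → ℤ} (h : IsGcdChain (n + 1) (pad 1 1 s) C) :
    (∀ i : Fin n, (i : ℕ) = 0 → C (i + 1) = C 0 * s i + 1) ∧
      (∀ k j : Fin n, (j : ℕ) = k + 1 →
        C (j + 1) * s k = C (k + 1) * s j + Int.gcd (s k) (s j)) ∧
      ∀ i : Fin n, (i : ℕ) + 1 = n → C (n + 1) * s i = C (i + 1) + 1 := by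
  refine ⟨fun i hi => ?_, fun k j hkj => ?_, fun i hi => ?_⟩
  · have h_left := h i (by omega)
    rw [pad_succ, hi] at h_left
    simpa [hi] using h_left
  · have h_step := h j (by omega)
    rw [pad_succ, hkj, pad_succ] at h_step
    rwa [hkj]
  · have hs_last : pad 1 1 s n = s i := (congrArg _ hi.symm).trans (pad_succ 1 1 s i)
    simpa [hs_last, hi] using h n (by omega)

theorem isGcdChain_pad (hn : 0 < n) {C : ℕ → ℤ}
    (h_left : ∀ i : Fin n, (i : ℕ) = 0 → C (i + 1) = C 0 * s i + 1)
    (h_step : ∀ k j : Fin n, (j : ℕ) = k + 1 →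
      C (j + 1) * s k = C (k + 1) * s j + Int.gcd (s k) (s j))
    (h_right : ∀ i : Fin n, (i : ℕ) + 1 = n → C (n + 1) * s i = C (i + 1) + 1) :
    IsGcdChain (n + 1) (pad 1 1 s) C := by
  rintro (_ | j) hj
  · have hs_first : pad 1 1 s 1 = s ⟨0, hn⟩ := pad_succ 1 1 s ⟨0, hn⟩
    simpa [hs_first] using h_left ⟨0, hn⟩ rfl
  · have hs_fst : pad 1 1 s (j + 1) = s ⟨j, by omega⟩ := pad_succ 1 1 s ⟨j, by omega⟩
    obtain rfl | hjn := (Nat.le_of_lt_succ hj).eq_or_lt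
    · simpa [hs_fst] using h_right ⟨j, by omega⟩ rfl
    · have hs_snd : pad 1 1 s (j + 1 + 1) = s ⟨j + 1, hjn⟩ := pad_succ 1 1 s ⟨j + 1, hjn⟩
      simpa [hs_fst, hs_snd] using h_step ⟨j, by omega⟩ ⟨j + 1, hjn⟩ rfl

theorem div_eq_div_of_cross_mul_eq {f : Fin n → ℤ} (hs : ∀ i, s i ≠ 0)
    (h : ∀ k j : Fin n, (j : ℕ) = k + 1 → f j * s k = f k * s j) (i k : Fin n) :
    (f i : ℚ) / s i = f k / s k := by
  have h_first (m : ℕ) (hm : m < n) :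
      (f ⟨m, hm⟩ : ℚ) / s ⟨m, hm⟩ = f ⟨0, by omega⟩ / s ⟨0, by omega⟩ := by
    induction m with
    | zero => rfl
    | succ m ih =>
      rw [← ih (by omega), div_eq_div_iff (Int.cast_ne_zero.2 (hs _)) (Int.cast_ne_zero.2 (hs _))]
      exact_mod_cast h ⟨m, by omega⟩ ⟨m + 1, hm⟩ rfl
  rw [h_first i i.isLt, h_first k k.isLt]

theorem exists_forall_eq_mul_of_cross_mul_eq {f : Fin n → ℤ} (hs : ∀ i, s i ≠ 0)
    (hcop : ∃ k j : Fin n, (j : ℕ) = k + 1 ∧ Int.gcd (s k) (s j) = 1)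
    (h : ∀ k j : Fin n, (j : ℕ) = k + 1 → f j * s k = f k * s j) :
    ∃ l, ∀ i, f i = l * s i := by
  obtain ⟨k, j, hkj, h_gcd⟩ := hcop
  obtain ⟨l, hl⟩ : s k ∣ f k :=
    (Int.isCoprime_iff_gcd_eq_one.2 h_gcd).dvd_of_dvd_mul_right (Dvd.intro_left _ (h k j hkj))
  refine ⟨l, fun i => ?_⟩
  have h_ratio := div_eq_div_of_cross_mul_eq hs h i k
  have hsk : (s k : ℚ) ≠ 0 := Int.cast_ne_zero.2 (hs k)
  rw [div_eq_iff (Int.cast_ne_zero.2 (hs i)), hl, Int.cast_mul, mul_div_cancel_left₀ _ hsk]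
    at h_ratio
  exact_mod_cast h_ratio

/-- `c` solves `c_1 = 1` and `c_j s_{j-1} = c_{j-1} s_j + gcd(s_{j-1}, s_j)` for `2 ≤ j ≤ n`
(0-based in Lean). -/
def IsGcdRecursion (s c : Fin n → ℤ) : Prop :=
  (∀ i : Fin n, (i : ℕ) = 0 → c i = 1) ∧
    ∀ k j : Fin n, (j : ℕ) = k + 1 → c j * s k = c k * s j + (Int.gcd (s k) (s j) : ℤ)

theorem IsGcdChain.isGcdRecursion {C : ℕ → ℤ}
    (h : IsGcdChain (n + 1) (pad 1 1 s) C) :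
    IsGcdRecursion s fun i => C (i + 1) - C 0 * s i := by
  obtain ⟨h_left, h_step, -⟩ := h.pad_equations
  refine ⟨fun i hi => by linarith [h_left i hi], fun k j hkj => ?_⟩
  linear_combination h_step k j hkj

theorem IsGcdChain.isGcdRecursion_rev {C : ℕ → ℤ}
    (h : IsGcdChain (n + 1) (pad 1 1 s) C) :
    IsGcdRecursion (fun i => s i.rev) fun i => C (n + 1) * s i.rev - C (i.rev + 1) := by
  obtain ⟨-, h_step, h_right⟩ := h.pad_equations
  refine ⟨fun i hi => ?_, fun k j hkj => ?_⟩
  · linarith [h_right i.rev (by rw [Fin.val_rev]; omega)]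
  · rw [Int.gcd_comm]
    linear_combination h_step j.rev k.rev (by simp only [Fin.val_rev]; omega)

theorem IsGcdRecursion.exists_isGcdChain (hs : ∀ i, s i ≠ 0)
    (hcop : ∃ k j : Fin n, (j : ℕ) = k + 1 ∧ Int.gcd (s k) (s j) = 1) {c d : Fin n → ℤ}
    (hc : IsGcdRecursion s c) (hd : IsGcdRecursion (fun i => s i.rev) d) :
    ∃ C, IsGcdChain (n + 1) (pad 1 1 s) C := by
  obtain ⟨hc_first, hc_step⟩ := hc
  obtain ⟨hd_first, hd_step⟩ := hd
  have h_cross (k j : Fin n) (hkj : (j : ℕ) = k + 1) :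
      (c j + d j.rev) * s k = (c k + d k.rev) * s j := by
    have hd_rev := hd_step j.rev k.rev (by simp only [Fin.val_rev]; omega)
    simp only [Fin.rev_rev, Int.gcd_comm (s j)] at hd_rev
    linear_combination hc_step k j hkj - hd_rev
  obtain ⟨l, hl⟩ := exists_forall_eq_mul_of_cross_mul_eq hs hcop h_cross
  refine ⟨pad 0 l c, isGcdChain_pad hcop.choose.pos (fun i hi => ?_) ?_ fun i hi => ?_⟩
  · simp [hc_first i hi]
  · simpa using hc_step
  · rw [pad_length_add_one, pad_succ, ← hl i, hd_first i.rev (by rw [Fin.val_rev]; omega)]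

end Recursions

end SEulerian

theorem sEulerian_palindromic_iff (n : ℕ) (s : Fin n → ℤ)
    (hs : ∀ i, 0 < s i)
    (hcop : ∃ k j : Fin n, (j : ℕ) = (k : ℕ) + 1 ∧ Int.gcd (s k) (s j) = 1) :
    IsPalindromic (hStar n s) ↔
      ∃ c d : Fin n → ℤ,
        (∀ i : Fin n, (i : ℕ) = 0 → c i = 1) ∧
        (∀ i : Fin n, (i : ℕ) = 0 → d i = 1) ∧
        (∀ k j : Fin n, (j : ℕ) = (k : ℕ) + 1 →
          c j * s k = c k * s j + (Int.gcd (s k) (s j) : ℤ)) ∧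
        (∀ k j : Fin n, (j : ℕ) = (k : ℕ) + 1 →
          d j * s k.rev = d k * s j.rev + (Int.gcd (s k.rev) (s j.rev) : ℤ)) := by
  rw [SEulerian.isPalindromic_hStar_iff_exists_isGcdChain hs]
  constructor
  · rintro ⟨C, hC⟩
    obtain ⟨hc_first, hc_step⟩ := hC.isGcdRecursion
    obtain ⟨hd_first, hd_step⟩ := hC.isGcdRecursion_rev
    exact ⟨_, _, hc_first, hd_first, hc_step, hd_step⟩
  · rintro ⟨c, d, hc_first, hd_first, hc_step, hd_step⟩
    exact SEulerian.IsGcdRecursion.exists_isGcdChain (fun i => (hs i).ne') hcop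
      ⟨hc_first, hc_step⟩ ⟨hd_first, hd_step⟩
end

section
/- Let s = (s_1,…,s_n) be a sequence of positive integers and let V(P_n^(s)) denote the vertex set of the s-lecture hall polytope. The map φ defined by φ(λ_1,…,λ_n) = (e_1,…,e_n) with e_i = (s_i − λ_i) mod s_i is a bijection from the set (P_n^(s) ∩ ℤ^n) \ V(P_n^(s)) of non-vertex lattice points of P_n^(s) onto the set I_{n,1}^(s) of s-inversion sequences with exactly one ascent. -/
open scoped BigOperators

/-!
A lattice point of the polytope that is not a vertex vanishes before some index `p`, has ratio
`x_p / s_p` strictly between `0` and `1` at `p` (ratio `1` would force all later ratios to be `1`,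
giving a vertex), and has weakly increasing ratios from `p` on. An inversion sequence whose only
ascent is at `p` vanishes before `p`, has positive ratio at `p`, and has weakly decreasing ratios
from `p` on. The reflection `x_i ↦ s_i - x_i` in the coordinates `i ≥ p` replaces each ratio `r`
by `1 - r`, so it exchanges the two families. It equals `φ` on the first and `λ(e)` without its
last coordinate on the second, so these maps are mutually inverse.
-/

section Ratios

variable {n : ℕ} {s x e : Fin n → ℤ} {i : Fin n}

theorem invRatio_pos_iff (hi : 0 < s i) : 0 < invRatio n s x i ↔ 0 < x i := by
  rw [invRatio, div_pos_iff_of_pos_right (mod_cast hi), Int.cast_pos]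

theorem invRatio_lt_one_iff (hi : 0 < s i) : invRatio n s x i < 1 ↔ x i < s i := by
  rw [invRatio, div_lt_one (mod_cast hi), Int.cast_lt]

theorem invRatio_nonneg_iff (hi : 0 < s i) : 0 ≤ invRatio n s x i ↔ 0 ≤ x i := by
  rw [invRatio, le_div_iff₀ (mod_cast hi), zero_mul, Int.cast_nonneg_iff]

theorem invRatio_le_one_iff (hi : 0 < s i) : invRatio n s x i ≤ 1 ↔ x i ≤ s i := by
  rw [invRatio, div_le_one (mod_cast hi), Int.cast_le]

theorem invRatio_eq_zero (hi : x i = 0) : invRatio n s x i = 0 := by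
  rw [invRatio, hi, Int.cast_zero, zero_div]

theorem prevRatio_of_isMin (hi : IsMin i) : prevRatio n s e i = 0 :=
  if_pos (Nat.eq_zero_of_le_zero (hi (b := ⟨0, i.pos⟩) (Nat.zero_le _)))

theorem prevRatio_of_not_isMin (hi : ¬IsMin i) :
    prevRatio n s e i = invRatio n s e (Order.pred i) := by
  have hcov : ((Order.pred i : Fin n) : ℕ) + 1 = i :=
    Nat.covBy_iff_add_one_eq.mp (Order.pred_covBy_of_not_isMin hi).coe_fin
  rw [prevRatio, if_neg (by omega)]
  congr 1
  exact Fin.ext (Nat.sub_eq_of_eq_add hcov.symm)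

theorem prevRatio_eq_zero (h : ∀ j < i, e j = 0) : prevRatio n s e i = 0 := by
  by_cases hi : IsMin i
  · exact prevRatio_of_isMin hi
  · rw [prevRatio_of_not_isMin hi, invRatio_eq_zero (h _ (Order.pred_lt_of_not_isMin hi))]

theorem mem_ascSet : i ∈ ascSet n s e ↔ prevRatio n s e i < invRatio n s e i := by
  simp only [ascSet, Finset.mem_filter_univ]

theorem mem_lhp_iff_monotone_invRatio :
    (fun i => (x i : ℝ)) ∈ lhp n s ↔
      Monotone (invRatio n s x) ∧ ∀ i, invRatio n s x i ∈ Set.Icc 0 1 := by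
  have cast_ratio (i : Fin n) : (x i : ℝ) / s i = (invRatio n s x i : ℚ) := by
    simp only [invRatio, Rat.cast_div, Rat.cast_intCast]
  simp only [lhp, Set.mem_ofPred_eq, cast_ratio, Rat.cast_nonneg, Rat.cast_le,
    ← Rat.cast_one (α := ℝ)]
  constructor
  · rintro ⟨hfirst, hstep, hlast⟩
    have hmono : Monotone (invRatio n s x) := (monotone_iff_forall_covBy _).mpr fun i j hij =>
      hstep i j (Nat.covBy_iff_add_one_eq.mp hij.coe_fin).symm
    refine ⟨hmono, fun i => ⟨?_, ?_⟩⟩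
    · exact (hfirst ⟨0, i.pos⟩ rfl).trans (hmono (Nat.zero_le _))
    · have hi : i ≤ ⟨n - 1, Nat.sub_one_lt_of_lt i.isLt⟩ := Nat.le_sub_one_of_lt i.isLt
      exact (hmono hi).trans (hlast _ rfl)
  · rintro ⟨hmono, hIcc⟩
    exact ⟨fun i _ => (hIcc i).1, fun i j hij => hmono (Fin.le_def.mpr (by omega)),
      fun i _ => (hIcc i).2⟩

end Ratios

section Reflection

variable {n : ℕ} {s x e : Fin n → ℤ} {p i : Fin n}

/-- The reflection `x ↦ s - x` in the coordinates from `p` on, with zeros before `p`. On vectors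
vanishing before `p` it is an involution, and it realises both the map `φ` of the theorem and the
map `e ↦ λ(e)` of `lamOf`. -/
def reflectFrom (s : Fin n → ℤ) (p : Fin n) (x : Fin n → ℤ) : Fin n → ℤ :=
  fun i => if p ≤ i then s i - x i else 0

theorem reflectFrom_of_le (hi : p ≤ i) : reflectFrom s p x i = s i - x i :=
  if_pos hi

theorem reflectFrom_of_lt (hi : i < p) : reflectFrom s p x i = 0 :=
  if_neg hi.not_ge

theorem reflectFrom_reflectFrom (h : ∀ i < p, x i = 0) :
    reflectFrom s p (reflectFrom s p x) = x := by
  funext i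
  rcases lt_or_ge i p with hi | hi
  · rw [reflectFrom_of_lt hi, h i hi]
  · rw [reflectFrom_of_le hi, reflectFrom_of_le hi, sub_sub_cancel]

theorem invRatio_reflectFrom (hsi : s i ≠ 0) (hi : p ≤ i) :
    invRatio n s (reflectFrom s p x) i = 1 - invRatio n s x i := by
  have hsi' : (s i : ℚ) ≠ 0 := mod_cast hsi
  rw [invRatio, invRatio, reflectFrom_of_le hi, Int.cast_sub, sub_div, div_self hsi']

/-- `x` has its first nonzero coordinate at `p`, and the ratio `x_p / s_p` there is strictly
between `0` and `1`. -/
structure StartsAt (s x : Fin n → ℤ) (p : Fin n) : Prop where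
  eq_zero_of_lt : ∀ i < p, x i = 0
  pos : 0 < x p
  lt : x p < s p

/-- The shape of the non-vertex lattice points of the lecture hall polytope: the ratios
`x_i / s_i` start at `p` and increase weakly from there on, up to at most `1`. -/
structure RisesFrom (s x : Fin n → ℤ) (p : Fin n) : Prop extends StartsAt s x p where
  monotoneOn : MonotoneOn (invRatio n s x) (Set.Ici p)
  le : ∀ i, p ≤ i → x i ≤ s i

/-- The shape of the inversion sequences with exactly one ascent: the ratios `e_i / s_i` start
at `p` and decrease weakly from there on, down to at least `0`. -/
structure FallsFrom (s e : Fin n → ℤ) (p : Fin n) : Prop extends StartsAt s e p where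
  antitoneOn : AntitoneOn (invRatio n s e) (Set.Ici p)
  nonneg : ∀ i, p ≤ i → 0 ≤ e i

theorem StartsAt.startsAt_reflectFrom (h : StartsAt s x p) : StartsAt s (reflectFrom s p x) p where
  eq_zero_of_lt _ hi := reflectFrom_of_lt hi
  pos := by rw [reflectFrom_of_le le_rfl]; exact sub_pos.mpr h.lt
  lt := by rw [reflectFrom_of_le le_rfl]; exact sub_lt_self _ h.pos

theorem RisesFrom.fallsFrom_reflectFrom (hs : ∀ i, s i ≠ 0) (h : RisesFrom s x p) :
    FallsFrom s (reflectFrom s p x) p where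
  toStartsAt := h.startsAt_reflectFrom
  antitoneOn i hi j hj hij := by
    rw [invRatio_reflectFrom (hs i) hi, invRatio_reflectFrom (hs j) hj]
    exact sub_le_sub_left (h.monotoneOn hi hj hij) 1
  nonneg i hi := by rw [reflectFrom_of_le hi]; exact sub_nonneg.mpr (h.le i hi)

theorem FallsFrom.risesFrom_reflectFrom (hs : ∀ i, s i ≠ 0) (h : FallsFrom s e p) :
    RisesFrom s (reflectFrom s p e) p where
  toStartsAt := h.startsAt_reflectFrom
  monotoneOn i hi j hj hij := by
    rw [invRatio_reflectFrom (hs i) hi, invRatio_reflectFrom (hs j) hj]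
    exact sub_le_sub_left (h.antitoneOn hi hj hij) 1
  le i hi := by rw [reflectFrom_of_le hi]; exact sub_le_self _ (h.nonneg i hi)

end Reflection

section LatticePoints

variable {n : ℕ} {s x : Fin n → ℤ} {p i : Fin n}

theorem RisesFrom.pos_of_le (hs : ∀ i, 0 < s i) (h : RisesFrom s x p) (hi : p ≤ i) : 0 < x i :=
  (invRatio_pos_iff (hs i)).mp <|
    ((invRatio_pos_iff (hs p)).mpr h.pos).trans_le (h.monotoneOn Set.self_mem_Ici hi hi)

theorem RisesFrom.sub_emod_eq_reflectFrom (hs : ∀ i, 0 < s i) (h : RisesFrom s x p) :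
    (fun i => (s i - x i) % s i) = reflectFrom s p x := by
  funext i
  rcases lt_or_ge i p with hi | hi
  · rw [reflectFrom_of_lt hi, h.eq_zero_of_lt i hi, sub_zero, Int.emod_self]
  · rw [reflectFrom_of_le hi]
    exact Int.emod_eq_of_lt (sub_nonneg.mpr (h.le i hi)) (sub_lt_self _ (h.pos_of_le hs hi))

theorem RisesFrom.mem_lhp (hs : ∀ i, 0 < s i) (h : RisesFrom s x p) :
    (fun i => (x i : ℝ)) ∈ lhp n s := by
  have zero_of_lt (i : Fin n) (hi : i < p) : invRatio n s x i = 0 :=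
    invRatio_eq_zero (h.eq_zero_of_lt i hi)
  have hnonneg (i : Fin n) : 0 ≤ invRatio n s x i := by
    rcases lt_or_ge i p with hi | hi
    · exact (zero_of_lt i hi).ge
    · exact (invRatio_nonneg_iff (hs i)).mpr (h.pos_of_le hs hi).le
  refine mem_lhp_iff_monotone_invRatio.mpr ⟨fun i j hij => ?_, fun i => ⟨hnonneg i, ?_⟩⟩
  · rcases lt_or_ge i p with hi | hi
    · exact (zero_of_lt i hi).trans_le (hnonneg j)
    · exact h.monotoneOn hi (hi.trans hij) hij
  · rcases lt_or_ge i p with hi | hi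
    · exact (zero_of_lt i hi).trans_le zero_le_one
    · exact (invRatio_le_one_iff (hs i)).mpr (h.le i hi)

theorem StartsAt.ne_zero (h : StartsAt s x p) : x ≠ 0 := by
  rintro rfl
  exact h.pos.false

theorem StartsAt.ne_lhpVertexZ (h : StartsAt s x p) (i : Fin n) : x ≠ lhpVertexZ n s i := by
  rintro rfl
  by_cases hi : i ≤ p
  · exact h.lt.ne (if_pos hi)
  · exact h.pos.ne' (if_neg hi)

theorem eq_lhpVertexZ_of_monotone_invRatio (hs : ∀ i, 0 < s i) (hmono : Monotone (invRatio n s x))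
    (hle : ∀ i, x i ≤ s i) (hzero : ∀ i < p, x i = 0) (hp : s p ≤ x p) :
    x = lhpVertexZ n s p := by
  funext i
  rcases lt_or_ge i p with hi | hi
  · rw [hzero i hi, lhpVertexZ, if_neg hi.not_ge]
  · have hone : 1 ≤ invRatio n s x p := not_lt.mp ((invRatio_lt_one_iff (hs p)).not.mpr hp.not_gt)
    have hi' : s i ≤ x i := not_lt.mp <|
      (invRatio_lt_one_iff (hs i)).not.mp (hone.trans (hmono hi)).not_gt
    rw [lhpVertexZ, if_pos hi, (hle i).antisymm hi']

theorem exists_risesFrom_of_mem_lhp (hs : ∀ i, 0 < s i) (hx : (fun i => (x i : ℝ)) ∈ lhp n s)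
    (hzero : x ≠ 0) (hvertex : ∀ i, x ≠ lhpVertexZ n s i) : ∃ p, RisesFrom s x p := by
  obtain ⟨hmono, hIcc⟩ := mem_lhp_iff_monotone_invRatio.mp hx
  have hle (i : Fin n) : x i ≤ s i := (invRatio_le_one_iff (hs i)).mp (hIcc i).2
  obtain ⟨p, hp, hmin⟩ := wellFounded_lt.has_min (Function.support x)
    (Function.support_nonempty_iff.mpr hzero)
  have hbefore (i : Fin n) (hi : i < p) : x i = 0 :=
    Function.notMem_support.mp fun hxi => hmin i hxi hi
  refine ⟨p, ⟨hbefore, ?_, ?_⟩, hmono.monotoneOn _, fun i _ => hle i⟩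
  · exact ((invRatio_nonneg_iff (hs p)).mp (hIcc p).1).lt_of_ne' hp
  · by_contra! hsp
    exact hvertex p (eq_lhpVertexZ_of_monotone_invRatio hs hmono hle hbefore hsp)

theorem mem_lhp_and_ne_vertex_iff (hs : ∀ i, 0 < s i) :
    ((fun i => (x i : ℝ)) ∈ lhp n s ∧ x ≠ 0 ∧ ∀ i, x ≠ lhpVertexZ n s i) ↔
      ∃ p, RisesFrom s x p :=
  ⟨fun ⟨hx, hzero, hvertex⟩ => exists_risesFrom_of_mem_lhp hs hx hzero hvertex,
    fun ⟨_, h⟩ => ⟨h.mem_lhp hs, h.ne_zero, h.ne_lhpVertexZ⟩⟩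

end LatticePoints

section InversionSequences

variable {n : ℕ} {s e : Fin n → ℤ} {p : Fin n}

theorem FallsFrom.isInvSeq (hs : ∀ i, 0 < s i) (h : FallsFrom s e p) : IsInvSeq n s e := by
  intro i
  rcases lt_or_ge i p with hi | hi
  · rw [h.eq_zero_of_lt i hi]
    exact ⟨le_rfl, hs i⟩
  · exact ⟨h.nonneg i hi, (invRatio_lt_one_iff (hs i)).mp <|
      (h.antitoneOn Set.self_mem_Ici hi hi).trans_lt ((invRatio_lt_one_iff (hs p)).mpr h.lt)⟩

theorem FallsFrom.ascSet_eq (hsp : 0 < s p) (h : FallsFrom s e p) : ascSet n s e = {p} := by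
  ext i
  rw [mem_ascSet, Finset.mem_singleton]
  rcases lt_trichotomy i p with hi | rfl | hi
  · have hprev : prevRatio n s e i = 0 :=
      prevRatio_eq_zero fun j hj => h.eq_zero_of_lt j (hj.trans hi)
    simp only [hprev, invRatio_eq_zero (h.eq_zero_of_lt i hi), lt_irrefl, hi.ne]
  · simp only [prevRatio_eq_zero h.eq_zero_of_lt, invRatio_pos_iff hsp, h.pos]
  · have hdesc : invRatio n s e i ≤ invRatio n s e (Order.pred i) :=
      h.antitoneOn (Order.le_pred_of_lt hi) hi.le (Order.pred_le i)
    simp only [prevRatio_of_not_isMin hi.not_isMin, hdesc.not_gt, hi.ne']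

theorem eq_zero_of_forall_notMem_ascSet (hs : ∀ i, 0 < s i) (he : ∀ i, 0 ≤ e i)
    (hasc : ∀ i < p, i ∉ ascSet n s e) : ∀ i < p, e i = 0 := by
  intro i
  induction i using WellFoundedLT.induction with
  | ind i ih =>
    intro hi
    have hratio : invRatio n s e i ≤ 0 :=
      (not_lt.mp (mem_ascSet.not.mp (hasc i hi))).trans_eq
        (prevRatio_eq_zero fun j hj => ih j hj (hj.trans hi))
    exact (not_lt.mp ((invRatio_pos_iff (hs i)).not.mp hratio.not_gt)).antisymm (he i)

theorem antitoneOn_invRatio_of_forall_notMem_ascSet (hasc : ∀ i, p < i → i ∉ ascSet n s e) :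
    AntitoneOn (invRatio n s e) (Set.Ici p) := by
  refine antitoneOn_of_le_pred Set.ordConnected_Ici fun i hmin _ hpred => ?_
  rw [← prevRatio_of_not_isMin hmin]
  exact not_lt.mp (mem_ascSet.not.mp (hasc i (hpred.trans_lt (Order.pred_lt_of_not_isMin hmin))))

theorem IsInvSeq.fallsFrom (he : IsInvSeq n s e) (hp : ascSet n s e = {p}) :
    FallsFrom s e p := by
  have hs (i : Fin n) : 0 < s i := (he i).1.trans_lt (he i).2
  have hasc (i : Fin n) (hi : i ≠ p) : i ∉ ascSet n s e := by
    rwa [hp, Finset.mem_singleton]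
  have hbefore : ∀ i < p, e i = 0 :=
    eq_zero_of_forall_notMem_ascSet hs (fun i => (he i).1) fun i hi => hasc i hi.ne
  have hratio : prevRatio n s e p < invRatio n s e p :=
    mem_ascSet.mp (hp ▸ Finset.mem_singleton_self p)
  rw [prevRatio_eq_zero hbefore, invRatio_pos_iff (hs p)] at hratio
  exact ⟨⟨hbefore, hratio, (he p).2⟩,
    antitoneOn_invRatio_of_forall_notMem_ascSet fun i hi => hasc i hi.ne', fun i _ => (he i).1⟩

theorem isInvSeq_and_asc_eq_one_iff (hs : ∀ i, 0 < s i) :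
    (IsInvSeq n s e ∧ asc n s e = 1) ↔ ∃ p, FallsFrom s e p := by
  rw [asc, Finset.card_eq_one]
  exact ⟨fun ⟨he, p, hp⟩ => ⟨p, he.fallsFrom hp⟩,
    fun ⟨p, h⟩ => ⟨h.isInvSeq hs, p, h.ascSet_eq (hs p)⟩⟩

theorem FallsFrom.init_lamOf_eq_reflectFrom (hsp : 0 < s p) (h : FallsFrom s e p) :
    Fin.init (lamOf n s e) = reflectFrom s p e := by
  funext i
  rw [Fin.init, lamOf, Fin.snoc_castSucc, h.ascSet_eq hsp]
  rcases lt_or_ge i p with hi | hi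
  · rw [reflectFrom_of_lt hi, Finset.filter_singleton, if_neg (Nat.not_le.mpr hi),
      Finset.card_empty, h.eq_zero_of_lt i hi, Nat.cast_zero, zero_mul, sub_zero]
  · rw [reflectFrom_of_le hi, Finset.filter_singleton, if_pos (Fin.le_def.mp hi),
      Finset.card_singleton, Nat.cast_one, one_mul]

end InversionSequences

theorem lattice_points_bijOn_one_ascent (n : ℕ) (s : Fin n → ℤ)
    (hs : ∀ i, 0 < s i) :
    Set.BijOn (fun x : Fin n → ℤ => fun i => (s i - x i) % s i)
      {x : Fin n → ℤ | (fun i => (x i : ℝ)) ∈ lhp n s ∧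
        x ≠ 0 ∧ ∀ i : Fin n, x ≠ lhpVertexZ n s i}
      {e : Fin n → ℤ | IsInvSeq n s e ∧ asc n s e = 1} := by
  have hs' (i : Fin n) : s i ≠ 0 := (hs i).ne'
  simp only [mem_lhp_and_ne_vertex_iff hs, isInvSeq_and_asc_eq_one_iff hs]
  refine Set.InvOn.bijOn (f' := fun e => Fin.init (lamOf n s e)) ⟨?_, ?_⟩ ?_ ?_
  · rintro x ⟨p, hx⟩
    simp only [hx.sub_emod_eq_reflectFrom hs,
      (hx.fallsFrom_reflectFrom hs').init_lamOf_eq_reflectFrom (hs p),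
      reflectFrom_reflectFrom hx.eq_zero_of_lt]
  · rintro e ⟨p, he⟩
    simp only [he.init_lamOf_eq_reflectFrom (hs p),
      (he.risesFrom_reflectFrom hs').sub_emod_eq_reflectFrom hs,
      reflectFrom_reflectFrom he.eq_zero_of_lt]
  · rintro x ⟨p, hx⟩
    exact ⟨p, by simpa only [hx.sub_emod_eq_reflectFrom hs] using hx.fallsFrom_reflectFrom hs'⟩
  · rintro e ⟨p, he⟩
    exact ⟨p, by
      simpa only [he.init_lamOf_eq_reflectFrom (hs p)] using he.risesFrom_reflectFrom hs'⟩
end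

section
/- Let s = (s_1,…,s_n) be a sequence of positive integers and let k ≥ 1. For e ∈ I_{n,k}^(s), define λ(e) ∈ ℤ^{n+1} by λ(e)_j = ℓ_j·s_j − e_j for 1 ≤ j ≤ n, where ℓ_j = #(Asc(e) ∩ {0,1,…,j−1}), and λ(e)_{n+1} = k. Then e ↦ λ(e) is a bijection from I_{n,k}^(s) onto the set of lattice points of the fundamental parallelepiped Π of P_n^(s) whose last coordinate equals k. -/
open scoped BigOperators

/-!
Write `y j = x j / s j` for a point `x` of `ℝ^(n+1)`, with `y 0 = 0`. Since the `j`-th coordinate of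
`∑ b i • v i` is `(b 1 + ⋯ + b j) * s j`, the point `x` lies in `Π` exactly when all the steps
`y (j+1) - y j`, and the last step `x (n+1) - y n`, lie in `[0, 1)`.

If `x` is integral, division with remainder gives unique `ℓ j ∈ ℤ` and `0 ≤ e j < s j` with
`x j = ℓ j * s j - e j`, so `y j = ℓ j - r j` where `r j = e j / s j` is in `[0, 1)`. A step of `y`
then lies in `[0, 1)` exactly when `ℓ` increases by `1` at ascents of `e` and is constant elsewhere,
that is, when `ℓ j` counts the ascents of `e` before `j`. Hence `x` is in `Π` if and only if
`x = λ(e)`, and `e` is recovered from `x` as the residue of `-x j` modulo `s j`.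
-/

section PartialSum

variable {M : Type*} {n : ℕ}

lemma eq_partialSum_iff [AddMonoid M] {f : Fin n → M} {g : Fin (n + 1) → M} :
    g = Fin.partialSum f ↔ g 0 = 0 ∧ ∀ j : Fin n, g j.succ = g j.castSucc + f j := by
  refine ⟨?_, fun ⟨h_zero, h_succ⟩ => funext fun i => ?_⟩
  · rintro rfl
    exact ⟨Fin.partialSum_zero f, Fin.partialSum_succ f⟩
  · induction i using Fin.induction with
    | zero => rw [h_zero, Fin.partialSum_zero]
    | succ j ih => rw [h_succ, ih, Fin.partialSum_succ]

lemma partialSum_eq_sum_filter [AddCommMonoid M] (f : Fin n → M) (i : Fin (n + 1)) :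
    Fin.partialSum f i = ∑ j with j.castSucc < i, f j := by
  suffices h : (fun i => ∑ j with j.castSucc < i, f j) = Fin.partialSum f from
    (congrFun h i).symm
  refine eq_partialSum_iff.2 ⟨by simp, fun j => ?_⟩
  have h_insert : ({i | i.castSucc < j.succ} : Finset (Fin n)) =
      insert j ({i | i.castSucc < j.castSucc} : Finset (Fin n)) := by
    ext i
    simp [le_iff_eq_or_lt]
  rw [h_insert, Finset.sum_insert (by simp), add_comm]

end PartialSum

lemma sub_mem_Ico_iff_eq_add_ite {R : Type*} [CommRing R] [LinearOrder R] [IsStrictOrderedRing R]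
    {ℓ ℓ' : ℤ} {r r' : R} (hr : r ∈ Set.Ico 0 1) (hr' : r' ∈ Set.Ico 0 1) :
    (ℓ' - r') - (ℓ - r) ∈ Set.Ico 0 1 ↔ ℓ' = ℓ + if r < r' then 1 else 0 := by
  obtain ⟨hr0, hr1⟩ := hr
  obtain ⟨hr0', hr1'⟩ := hr'
  constructor
  · rintro ⟨h0, h1⟩
    split_ifs with h
    · have h_lower : ℓ < ℓ' := by exact_mod_cast (by linarith : (ℓ : R) < ℓ')
      have h_upper : ℓ' < ℓ + 2 := by exact_mod_cast (by linarith : (ℓ' : R) < ℓ + 2)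
      omega
    · have h_lower : ℓ < ℓ' + 1 := by exact_mod_cast (by linarith : (ℓ : R) < ℓ' + 1)
      have h_upper : ℓ' < ℓ + 1 := by exact_mod_cast (by linarith : (ℓ' : R) < ℓ + 1)
      omega
  · rintro rfl
    split_ifs <;> push_cast <;> constructor <;> linarith

section FundamentalParallelepiped

variable {n : ℕ} {s : Fin n → ℤ} {x : Fin (n + 1) → ℝ}

lemma sum_mul_lhpVertexR (b : Fin n → ℝ) (j : Fin n) :
    ∑ i, b i * lhpVertexR n s i j = Fin.partialSum b j.succ * s j := by
  simp [partialSum_eq_sum_filter, lhpVertexR, Finset.sum_mul, Finset.sum_filter]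

lemma mem_fpp_iff_exists_partialSum :
    x ∈ fpp n s ↔ ∃ (a : ℝ) (b : Fin n → ℝ), a ∈ Set.Ico 0 1 ∧ (∀ i, b i ∈ Set.Ico 0 1) ∧
      (∀ j : Fin n, x j.castSucc = Fin.partialSum b j.succ * s j) ∧
      x (Fin.last n) = a + Fin.partialSum b (Fin.last n) := by
  simp [fpp, funext_iff, Fin.forall_fin_succ', sum_mul_lhpVertexR,
    partialSum_eq_sum_filter (i := Fin.last n)]

lemma mem_fpp_iff_sub_mem_Ico (hs : ∀ i, s i ≠ 0) {y : Fin (n + 1) → ℝ} (hy0 : y 0 = 0)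
    (hxy : ∀ j : Fin n, x j.castSucc = y j.succ * s j) :
    x ∈ fpp n s ↔ (∀ j : Fin n, y j.succ - y j.castSucc ∈ Set.Ico 0 1) ∧
      x (Fin.last n) - y (Fin.last n) ∈ Set.Ico 0 1 := by
  rw [mem_fpp_iff_exists_partialSum]
  constructor
  · rintro ⟨a, b, ha, hb, hx, hx_last⟩
    have hy : y = Fin.partialSum b := by
      refine funext <| Fin.cases (by simp [hy0]) fun j => ?_
      exact mul_right_cancel₀ (Int.cast_ne_zero.2 (hs j)) ((hxy j).symm.trans (hx j))
    simpa [hy, Fin.partialSum_succ, hx_last] using And.intro hb ha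
  · rintro ⟨h_step, h_last⟩
    have hy : y = Fin.partialSum fun j : Fin n => y j.succ - y j.castSucc :=
      eq_partialSum_iff.2 ⟨hy0, fun j => by ring⟩
    refine ⟨_, fun j => y j.succ - y j.castSucc, h_last, h_step, ?_, ?_⟩
    · simpa only [← hy] using hxy
    · rw [← hy, sub_add_cancel]

end FundamentalParallelepiped

section InversionSequence

variable {n : ℕ} {s e : Fin n → ℤ}

/-- The ratios `e_i / s_i` for `0 ≤ i ≤ n`, with the paper's convention `e_0 / s_0 = 0`. -/
def extRatio (n : ℕ) (s e : Fin n → ℤ) : Fin (n + 1) → ℚ :=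
  Fin.cons 0 (invRatio n s e)

lemma extRatio_castSucc (j : Fin n) : extRatio n s e j.castSucc = prevRatio n s e j := by
  obtain ⟨_ | m, hm⟩ := j
  · simp [extRatio, prevRatio]
  · exact Fin.cons_succ (α := fun _ => ℚ) 0 (invRatio n s e) ⟨m, by omega⟩

lemma mem_ascSet_s8 {j : Fin n} :
    j ∈ ascSet n s e ↔ extRatio n s e j.castSucc < extRatio n s e j.succ := by
  rw [extRatio_castSucc]
  simp [ascSet, extRatio]

lemma extRatio_mem_Ico (he : IsInvSeq n s e) (i : Fin (n + 1)) :
    extRatio n s e i ∈ Set.Ico 0 1 := by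
  cases i using Fin.cases with
  | zero => simp [extRatio]
  | succ j =>
    obtain ⟨h_nonneg, h_lt⟩ := he j
    have hs : (0 : ℚ) < s j := by exact_mod_cast h_nonneg.trans_lt h_lt
    simp only [extRatio, Fin.cons_succ, invRatio, Set.mem_Ico, div_lt_one hs]
    exact ⟨div_nonneg (by exact_mod_cast h_nonneg) hs.le, by exact_mod_cast h_lt⟩

/-- The number `ℓ_i = #(Asc(e) ∩ {0,…,i-1})` of ascents before position `i`, for `0 ≤ i ≤ n`. -/
def ascCount (n : ℕ) (s e : Fin n → ℤ) (i : Fin (n + 1)) : ℕ :=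
  ((ascSet n s e).filter fun j => j.castSucc < i).card

lemma ascCount_last : ascCount n s e (Fin.last n) = asc n s e := by
  simp [ascCount, asc]

lemma ascCount_eq_partialSum :
    (fun i => (ascCount n s e i : ℤ)) =
      Fin.partialSum fun j => if j ∈ ascSet n s e then 1 else 0 := by
  funext i
  rw [ascCount, partialSum_eq_sum_filter, Finset.sum_boole, Finset.filter_comm,
    Finset.filter_univ_mem]

lemma lamOf_castSucc (j : Fin n) :
    lamOf n s e j.castSucc = ascCount n s e j.succ * s j - e j := by
  simp only [lamOf, Fin.snoc_castSucc, ascCount, Fin.castSucc_lt_succ_iff, Fin.le_def]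

lemma lamOf_last : lamOf n s e (Fin.last n) = asc n s e := by
  simp [lamOf]

lemma mem_fpp_iff_eq_ascCount (he : IsInvSeq n s e) {x ℓ : Fin (n + 1) → ℤ}
    (hℓ0 : ℓ 0 = 0) (hx : ∀ j : Fin n, x j.castSucc = ℓ j.succ * s j - e j) :
    (fun i => (x i : ℝ)) ∈ fpp n s ↔
      (ℓ = fun i => (ascCount n s e i : ℤ)) ∧ x (Fin.last n) = ℓ (Fin.last n) := by
  have hs (j : Fin n) : s j ≠ 0 := ((he j).1.trans_lt (he j).2).ne'
  have h_ratio (i : Fin (n + 1)) : (extRatio n s e i : ℝ) ∈ Set.Ico 0 1 := by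
    have h := extRatio_mem_Ico he i
    exact ⟨by exact_mod_cast h.1, by exact_mod_cast h.2⟩
  have h_coord (j : Fin n) :
      (x j.castSucc : ℝ) = (ℓ j.succ - extRatio n s e j.succ) * s j := by
    have hsj : (s j : ℝ) ≠ 0 := Int.cast_ne_zero.2 (hs j)
    simp [hx, extRatio, invRatio, sub_mul, div_mul_cancel₀ _ hsj]
  -- The last step ends at `r' = 0`, so it is never an ascent.
  have h_last : (x (Fin.last n) : ℝ) - (ℓ (Fin.last n) - extRatio n s e (Fin.last n)) ∈
      Set.Ico 0 1 ↔ x (Fin.last n) = ℓ (Fin.last n) := by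
    simpa [(h_ratio _).1.not_gt] using
      sub_mem_Ico_iff_eq_add_ite (ℓ' := x (Fin.last n)) (h_ratio _) (r' := 0) (by simp)
  rw [mem_fpp_iff_sub_mem_Ico hs (y := fun i => ℓ i - extRatio n s e i) (by simp [hℓ0, extRatio])
    h_coord, h_last, ascCount_eq_partialSum, eq_partialSum_iff]
  simp [sub_mem_Ico_iff_eq_add_ite (h_ratio _) (h_ratio _), mem_ascSet_s8, hℓ0]

lemma lamOf_mem_fpp (he : IsInvSeq n s e) : (fun i => (lamOf n s e i : ℝ)) ∈ fpp n s :=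
  (mem_fpp_iff_eq_ascCount he (by simp [ascCount]) lamOf_castSucc).2
    ⟨rfl, by rw [lamOf_last, ascCount_last]⟩

/-- The inverse of `e ↦ λ(e)`: the residues of `-x_j` modulo `s_j`, for `1 ≤ j ≤ n`. -/
def negResidue (n : ℕ) (s : Fin n → ℤ) (x : Fin (n + 1) → ℤ) : Fin n → ℤ :=
  fun j => -x j.castSucc % s j

lemma isInvSeq_negResidue (hs : ∀ i, 0 < s i) (x : Fin (n + 1) → ℤ) :
    IsInvSeq n s (negResidue n s x) :=
  fun j => ⟨Int.emod_nonneg _ (hs j).ne', Int.emod_lt_of_pos _ (hs j)⟩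

lemma negResidue_lamOf (he : IsInvSeq n s e) : negResidue n s (lamOf n s e) = e := by
  funext j
  rw [negResidue, lamOf_castSucc, neg_sub, sub_eq_add_neg, ← neg_mul,
    Int.add_mul_emod_self_right, Int.emod_eq_of_lt (he j).1 (he j).2]

lemma lamOf_negResidue (hs : ∀ i, 0 < s i) {x : Fin (n + 1) → ℤ}
    (hx : (fun i => (x i : ℝ)) ∈ fpp n s) : lamOf n s (negResidue n s x) = x := by
  let ℓ : Fin (n + 1) → ℤ := Fin.cons 0 fun j => -(-x j.castSucc / s j)
  have h_coord (j : Fin n) : x j.castSucc = ℓ j.succ * s j - negResidue n s x j := by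
    simp only [ℓ, Fin.cons_succ, negResidue]
    linarith [Int.mul_ediv_add_emod (-x j.castSucc) (s j)]
  obtain ⟨hℓ, h_last⟩ :=
    (mem_fpp_iff_eq_ascCount (isInvSeq_negResidue hs x) rfl h_coord).1 hx
  funext i
  cases i using Fin.lastCases with
  | last => rw [lamOf_last, ← ascCount_last, h_last, hℓ]
  | cast j => rw [lamOf_castSucc, h_coord, hℓ]

lemma bijOn_lamOf_fpp (hs : ∀ i, 0 < s i) :
    Set.BijOn (lamOf n s) {e | IsInvSeq n s e} {x | (fun i => (x i : ℝ)) ∈ fpp n s} :=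
  Set.InvOn.bijOn (f' := negResidue n s)
    ⟨fun _ => negResidue_lamOf, fun _ => lamOf_negResidue hs⟩
    (fun _ => lamOf_mem_fpp) fun x _ => isInvSeq_negResidue hs x

end InversionSequence

theorem invSeq_bijOn_fpp (n : ℕ) (s : Fin n → ℤ) (hs : ∀ i, 0 < s i)
    (k : ℕ) (hk : 1 ≤ k) :
    Set.BijOn (lamOf n s)
      {e : Fin n → ℤ | IsInvSeq n s e ∧ asc n s e = k}
      {x : Fin (n + 1) → ℤ |
        (fun i => (x i : ℝ)) ∈ fpp n s ∧ x (Fin.last n) = (k : ℤ)} := by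
  have h_last : Set.MapsTo (lamOf n s) {e | asc n s e = k} {x | x (Fin.last n) = k} :=
    fun e he => lamOf_last.trans (congrArg Nat.cast he)
  refine (bijOn_lamOf_fpp hs).inter_mapsTo h_last ?_
  rintro e ⟨-, he⟩
  exact Nat.cast_injective (lamOf_last.symm.trans he)
end
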